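/- Let H₁ and H₂ be finite-dimensional Hilbert spaces and K an invertible matrix on H₁ ⊗ H₂. Let p, q, r, s be real parameters with 0 < p, q, r ≤ 1, p/(p+q+r) ≤ s, (q+r)/(p+q+r) ≤ s, and s ≤ 1/(p+q+r). For A positive definite on H₁ ⊗ H₂ and B positive definite on H₂, define Q(A,B) := sup_C Tr[(A^{p/2} K (I₁ ⊗ B^{q/2} C^r B^{q/2}) K† A^{p/2})^s], the supremum taken over all density matrices C on H₂. Then Q is jointly concave: for all positive definite A₀, A₁ on H₁ ⊗ H₂, all positive definite B₀, B₁ on H₂, and all t ∈ [0,1], Q(t·A₀+(1−t)·A₁, t·B₀+(1−t)·B₁) ≥ t·Q(A₀,B₀) + (1−t)·Q(A₁,B₁). -/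

import Mathlib

open scoped Kronecker ComplexOrder
open Matrix

/-- Real power of a (Hermitian, in practice positive semidefinite) matrix, defined spectrally:
positive eigenvalues are raised to the power `t`, zero (and negative) eigenvalues are sent to `0`. -/
noncomputable def matPow {n : Type*} [Fintype n] [DecidableEq n]
    (M : Matrix n n ℂ) (t : ℝ) : Matrix n n ℂ :=
  if hM : M.IsHermitian then
    (hM.eigenvectorUnitary : Matrix n n ℂ) *
      Matrix.diagonal (fun i =>
        ((if 0 < hM.eigenvalues i then (hM.eigenvalues i) ^ t else 0 : ℝ) : ℂ)) *
      (star (hM.eigenvectorUnitary : Matrix n n ℂ))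
  else 0

/-- Partial trace over the first tensor factor. -/
noncomputable def ptraceFst {m n : Type*} [Fintype m] [Fintype n]
    (M : Matrix (m × n) (m × n) ℂ) : Matrix n n ℂ :=
  Matrix.of fun j j' => ∑ i, M (i, j) (i, j')

/-- Partial trace over the second tensor factor. -/
noncomputable def ptraceSnd {m n : Type*} [Fintype m] [Fintype n]
    (M : Matrix (m × n) (m × n) ℂ) : Matrix m m ℂ :=
  Matrix.of fun i i' => ∑ j, M (i, j) (i', j)

/-- A density matrix: positive semidefinite with unit trace. -/
def IsDensity {n : Type*} [Fintype n] [DecidableEq n] (ρ : Matrix n n ℂ) : Prop :=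
  ρ.PosSemidef ∧ ρ.trace = 1

/-- The optimized trace functional of Statement 0:
`Q(A,B) = sup_C Tr[(A^{p/2} K (I₁ ⊗ B^{q/2} C^r B^{q/2}) K† A^{p/2})^s]`,
the supremum over all density matrices `C` on `H₂`. -/
noncomputable def Qsup {n₁ n₂ : Type*} [Fintype n₁] [DecidableEq n₁]
    [Fintype n₂] [DecidableEq n₂] (K : Matrix (n₁ × n₂) (n₁ × n₂) ℂ) (p q r s : ℝ)
    (A : Matrix (n₁ × n₂) (n₁ × n₂) ℂ) (B : Matrix n₂ n₂ ℂ) : ℝ :=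
  sSup {x | ∃ C : Matrix n₂ n₂ ℂ, IsDensity C ∧
    x = (Matrix.trace (matPow
      (matPow A (p / 2) * K *
        ((1 : Matrix n₁ n₁ ℂ) ⊗ₖ (matPow B (q / 2) * matPow C r * matPow B (q / 2))) *
        Kᴴ * matPow A (p / 2)) s)).re}

section helpers

variable {n m : Type*} [Fintype n] [DecidableEq n] [Fintype m] [DecidableEq m]

/-- spectral power with `0^0 = 1` -/
noncomputable def mp (A : Matrix n n ℂ) (t : ℝ) : Matrix n n ℂ := cfc (fun x : ℝ => x ^ t) A

/-- trace of a power -/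
noncomputable def tp (A : Matrix n n ℂ) (t : ℝ) : ℝ := (Matrix.trace (mp A t)).re

lemma contOn_spec (A : Matrix n n ℂ) (f : ℝ → ℝ) : ContinuousOn f (spectrum ℝ A) := by
  exact (Matrix.finite_real_spectrum (A := A)).continuousOn f

lemma psd_spec {A : Matrix n n ℂ} (hA : A.PosSemidef) {x : ℝ} (hx : x ∈ spectrum ℝ A) : 0 ≤ x := by
  rw [hA.1.spectrum_real_eq_range_eigenvalues] at hx
  obtain ⟨i, rfl⟩ := hx
  exact hA.eigenvalues_nonneg i

lemma pd_spec {A : Matrix n n ℂ} (hA : A.PosDef) {x : ℝ} (hx : x ∈ spectrum ℝ A) : 0 < x := by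
  rw [hA.1.spectrum_real_eq_range_eigenvalues] at hx
  obtain ⟨i, rfl⟩ := hx
  exact hA.eigenvalues_pos i

lemma cfc_form {A : Matrix n n ℂ} (hA : A.IsHermitian) (f : ℝ → ℝ) :
    cfc f A = (hA.eigenvectorUnitary : Matrix n n ℂ) *
      Matrix.diagonal (fun i => ((f (hA.eigenvalues i) : ℝ) : ℂ)) *
      (hA.eigenvectorUnitary : Matrix n n ℂ)ᴴ := by
  rw [hA.cfc_eq, Matrix.IsHermitian.cfc, Unitary.conjStarAlgAut_apply]
  rfl

lemma uu {A : Matrix n n ℂ} (hA : A.IsHermitian) :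
    (hA.eigenvectorUnitary : Matrix n n ℂ) * (hA.eigenvectorUnitary : Matrix n n ℂ)ᴴ = 1 := by
  have := Unitary.coe_mul_star_self hA.eigenvectorUnitary
  simpa [Matrix.star_eq_conjTranspose] using this

lemma uu' {A : Matrix n n ℂ} (hA : A.IsHermitian) :
    (hA.eigenvectorUnitary : Matrix n n ℂ)ᴴ * (hA.eigenvectorUnitary : Matrix n n ℂ) = 1 := by
  have := Unitary.coe_star_mul_self hA.eigenvectorUnitary
  simpa [Matrix.star_eq_conjTranspose] using this

lemma cfc_psd {A : Matrix n n ℂ} (hA : A.IsHermitian) (f : ℝ → ℝ)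
    (hf : ∀ x ∈ spectrum ℝ A, 0 ≤ f x) : (cfc f A).PosSemidef := by
  rw [cfc_form hA]
  apply Matrix.PosSemidef.mul_mul_conjTranspose_same
  apply Matrix.PosSemidef.diagonal
  intro i
  have := hf _ (hA.eigenvalues_mem_spectrum_real i)
  simpa using this

lemma cfc_pd {A : Matrix n n ℂ} (hA : A.IsHermitian) (f : ℝ → ℝ)
    (hf : ∀ x ∈ spectrum ℝ A, 0 < f x) : (cfc f A).PosDef := by
  rw [cfc_form hA]
  apply Matrix.PosDef.mul_mul_conjTranspose_same
  · apply Matrix.PosDef.diagonal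
    intro i
    have := hf _ (hA.eigenvalues_mem_spectrum_real i)
    simpa using this
  · exact Matrix.vecMul_injective_of_isUnit
      (IsUnit.of_mul_eq_one _ (uu hA))

lemma mp_psd {A : Matrix n n ℂ} (hA : A.PosSemidef) (t : ℝ) : (mp A t).PosSemidef :=
  cfc_psd hA.1 _ fun _ hx => Real.rpow_nonneg (psd_spec hA hx) _

lemma mp_pd {A : Matrix n n ℂ} (hA : A.PosDef) (t : ℝ) : (mp A t).PosDef :=
  cfc_pd hA.1 _ fun _ hx => Real.rpow_pos_of_pos (pd_spec hA hx) _

lemma mp_herm (A : Matrix n n ℂ) (t : ℝ) : (mp A t)ᴴ = mp A t := by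
  have : IsSelfAdjoint (mp A t) := cfc_predicate (R := ℝ) _ _
  exact this

lemma mp_zero {A : Matrix n n ℂ} (hA : A.IsHermitian) : mp A 0 = 1 := by
  unfold mp
  simp only [Real.rpow_zero]
  exact cfc_const_one ℝ A (ha := hA)

lemma mp_one {A : Matrix n n ℂ} (hA : A.IsHermitian) : mp A 1 = A := by
  unfold mp
  simp only [Real.rpow_one]
  exact cfc_id' ℝ A (ha := hA)

lemma mp_mul {A : Matrix n n ℂ} (hA : A.PosSemidef) {s t : ℝ} (hs : 0 ≤ s) (ht : 0 ≤ t) :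
    mp A s * mp A t = mp A (s + t) := by
  unfold mp
  rw [← cfc_mul _ _ A (contOn_spec A _) (contOn_spec A _)]
  apply cfc_congr
  intro x hx
  exact (Real.rpow_add_of_nonneg (psd_spec hA hx) hs ht).symm

lemma mp_mul_pd {A : Matrix n n ℂ} (hA : A.PosDef) (s t : ℝ) :
    mp A s * mp A t = mp A (s + t) := by
  unfold mp
  rw [← cfc_mul _ _ A (contOn_spec A _) (contOn_spec A _)]
  apply cfc_congr
  intro x hx
  exact (Real.rpow_add (pd_spec hA hx) s t).symm

lemma cfc_comp_mat {A : Matrix n n ℂ} (hA : A.IsHermitian) (f g : ℝ → ℝ) :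
    cfc g (cfc f A) = cfc (fun x => g (f x)) A := by
  have := cfc_comp g f A (ha := hA) (hg := ?_) (hf := contOn_spec A _)
  · exact this.symm
  · exact ((Matrix.finite_real_spectrum (A := A)).image f).continuousOn g

lemma mp_mp {A : Matrix n n ℂ} (hA : A.PosSemidef) (s t : ℝ) : mp (mp A s) t = mp A (s * t) := by
  unfold mp
  rw [cfc_comp_mat hA.1]
  apply cfc_congr
  intro x hx
  exact (Real.rpow_mul (psd_spec hA hx) s t).symm

lemma mp_smul {A : Matrix n n ℂ} (hA : A.PosSemidef) {k : ℝ} (hk : 0 ≤ k) (t : ℝ) :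
    mp (k • A) t = k ^ t • mp A t := by
  have h1 : k • A = cfc (fun x : ℝ => k * x) A := by
    have h2 := mp_one hA.1
    unfold mp at h2
    simp only [Real.rpow_one] at h2
    rw [cfc_const_mul k _ A (contOn_spec A _), h2]
  rw [h1]
  unfold mp
  rw [cfc_comp_mat hA.1, ← cfc_smul _ _ _ (contOn_spec A _)]
  apply cfc_congr
  intro x hx
  simp only [smul_eq_mul]
  exact Real.mul_rpow hk (psd_spec hA hx)

lemma matPow_eq {A : Matrix n n ℂ} (hA : A.PosSemidef) {t : ℝ} (ht : 0 < t) :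
    matPow A t = mp A t := by
  unfold matPow mp
  rw [dif_pos hA.1, cfc_form hA.1]
  congr 3
  ext i
  split_ifs with h
  · rfl
  · have : hA.1.eigenvalues i = 0 := le_antisymm (not_lt.mp h) (hA.eigenvalues_nonneg i)
    rw [this, Real.zero_rpow ht.ne']

lemma trace_cfc {A : Matrix n n ℂ} (hA : A.IsHermitian) (f : ℝ → ℝ) :
    (Matrix.trace (cfc f A)).re = ∑ i, f (hA.eigenvalues i) := by
  rw [cfc_form hA, Matrix.trace_mul_comm, ← mul_assoc, uu' hA, one_mul, Matrix.trace_diagonal]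
  simp

lemma tp_charpoly {A B : Matrix n n ℂ} (hA : A.IsHermitian) (hB : B.IsHermitian)
    (h : A.charpoly = B.charpoly) (t : ℝ) : tp A t = tp B t := by
  have h1 := (hA.eigenvalues_eq_eigenvalues_iff hB).2 h
  unfold tp mp
  rw [trace_cfc hA, trace_cfc hB, h1]

lemma dbl {A : Matrix n n ℂ} (hA : A.IsHermitian) {B : Matrix m m ℂ} (hB : B.IsHermitian)
    (f g : ℝ → ℝ) (L : Matrix n m ℂ) :
    (Matrix.trace (Lᴴ * cfc f A * L * cfc g B)).re =
      ∑ j, ∑ k, Complex.normSq (((hA.eigenvectorUnitary : Matrix n n ℂ)ᴴ * L *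
        (hB.eigenvectorUnitary : Matrix m m ℂ)) j k) * (f (hA.eigenvalues j) *
          g (hB.eigenvalues k)) := by
  rw [cfc_form hA, cfc_form hB]
  set U := (hA.eigenvectorUnitary : Matrix n n ℂ)
  set V := (hB.eigenvectorUnitary : Matrix m m ℂ)
  set M := Uᴴ * L * V with hM
  have h1 : Matrix.trace (Lᴴ * (U * Matrix.diagonal (fun i => ((f (hA.eigenvalues i) : ℝ) : ℂ)) * Uᴴ) * L *
      (V * Matrix.diagonal (fun i => ((g (hB.eigenvalues i) : ℝ) : ℂ)) * Vᴴ)) =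
      Matrix.trace (Mᴴ * Matrix.diagonal (fun i => ((f (hA.eigenvalues i) : ℝ) : ℂ)) * M *
        Matrix.diagonal (fun i => ((g (hB.eigenvalues i) : ℝ) : ℂ))) := by
    rw [← mul_assoc, Matrix.trace_mul_comm, hM]
    simp only [Matrix.conjTranspose_mul, Matrix.conjTranspose_conjTranspose, Matrix.mul_assoc]
  rw [h1, Matrix.trace]
  have h2 : ∀ k, (Mᴴ * Matrix.diagonal (fun i => ((f (hA.eigenvalues i) : ℝ) : ℂ)) * M *
        Matrix.diagonal (fun i => ((g (hB.eigenvalues i) : ℝ) : ℂ))).diag k =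
      (∑ j, star (M j k) * (f (hA.eigenvalues j) : ℂ) * M j k) * (g (hB.eigenvalues k) : ℂ) := by
    intro k
    rw [Matrix.diag_apply, Matrix.mul_diagonal, Matrix.mul_apply]
    simp only [Matrix.mul_diagonal, Matrix.conjTranspose_apply]
  rw [Finset.sum_comm, Complex.re_sum]
  refine Finset.sum_congr rfl fun k _ => ?_
  rw [h2]
  rw [Finset.sum_mul, Complex.re_sum]
  refine Finset.sum_congr rfl fun j _ => ?_
  have : star (M j k) * (f (hA.eigenvalues j) : ℂ) * M j k * (g (hB.eigenvalues k) : ℂ)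
     = ((Complex.normSq (M j k) * (f (hA.eigenvalues j) * g (hB.eigenvalues k)) : ℝ) : ℂ) := by
    push_cast
    rw [Complex.normSq_eq_conj_mul_self]
    simp only [Complex.star_def]
    ring
  rw [this, Complex.ofReal_re]

lemma tr_mul_nonneg {A B : Matrix n n ℂ} (hA : A.PosSemidef) (hB : B.PosSemidef) :
    0 ≤ (Matrix.trace (A * B)).re := by
  have h := dbl hA.1 hB.1 id id 1
  have hA' : IsSelfAdjoint A := hA.1
  have hB' : IsSelfAdjoint B := hB.1
  rw [cfc_id ℝ A, cfc_id ℝ B] at h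
  simp only [Matrix.conjTranspose_one, one_mul, mul_one] at h
  rw [h]
  refine Finset.sum_nonneg fun j _ => Finset.sum_nonneg fun k _ => ?_
  exact mul_nonneg (Complex.normSq_nonneg _)
    (mul_nonneg (hA.eigenvalues_nonneg j) (hB.eigenvalues_nonneg k))

lemma psd_tr_nonneg {A : Matrix n n ℂ} (hA : A.PosSemidef) :
    0 ≤ (Matrix.trace A).re := by
  have := hA.trace_nonneg
  exact (Complex.nonneg_iff.1 this).1

lemma tp_nonneg {A : Matrix n n ℂ} (hA : A.PosSemidef) (t : ℝ) : 0 ≤ tp A t :=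
  psd_tr_nonneg (mp_psd hA t)

end helpers

section lieb

variable {n m : Type*} [Fintype n] [DecidableEq n] [Fintype m] [DecidableEq m]

lemma scal_int {p : ℝ} (hp : p ∈ Set.Ioo (0:ℝ) 1) {a d : ℝ} (ha : 0 ≤ a) (hd : 0 ≤ d) :
    MeasureTheory.IntegrableOn (fun τ : ℝ => τ ^ (p - 1) * (a * d / (a + τ * d))) (Set.Ioi 0) ∧
    (∫ τ in Set.Ioi (0:ℝ), τ ^ (p - 1) * (a * d / (a + τ * d))) =
      (∫ τ in Set.Ioi (0:ℝ), Real.rpowIntegrand₀₁ p τ 1) * (a ^ p * d ^ (1 - p)) := by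
  rcases hd.eq_or_lt with rfl | hd
  · have : (1 - p) ≠ 0 := by have := hp.2; linarith
    simp [Real.zero_rpow this]
  have hx : 0 ≤ a / d := by positivity
  have key : Set.EqOn (fun τ : ℝ => d * Real.rpowIntegrand₀₁ p τ (a / d))
      (fun τ : ℝ => τ ^ (p - 1) * (a * d / (a + τ * d))) (Set.Ioi 0) := by
    intro τ hτ
    have hτ' : (0:ℝ) < τ := hτ
    simp only
    rw [Real.rpowIntegrand₀₁_eq_pow_div hp hτ'.le hx]
    have h2 : a + τ * d ≠ 0 := by positivity
    have h1 : τ + a / d = (a + τ * d) / d := by field_simp; ring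
    rw [h1]
    field_simp
  have hi : MeasureTheory.IntegrableOn (fun τ : ℝ => d * Real.rpowIntegrand₀₁ p τ (a / d)) (Set.Ioi 0) :=
    (Real.integrableOn_rpowIntegrand₀₁_Ioi hp hx).const_mul d
  refine ⟨hi.congr_fun key measurableSet_Ioi, ?_⟩
  rw [← MeasureTheory.setIntegral_congr_fun measurableSet_Ioi key, MeasureTheory.integral_const_mul,
    Real.integral_rpowIntegrand₀₁_eq_rpow_mul_const hp hx, Real.div_rpow ha hd.le,
    Real.rpow_sub hd, Real.rpow_one]
  ring

lemma scal_pos {p : ℝ} (hp : p ∈ Set.Ioo (0:ℝ) 1) :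
    0 < ∫ τ in Set.Ioi (0:ℝ), Real.rpowIntegrand₀₁ p τ 1 := by
  have h := Real.rpow_eq_const_mul_integral hp (x := 1) zero_le_one
  have h0 : 0 ≤ ∫ τ in Set.Ioi (0:ℝ), Real.rpowIntegrand₀₁ p τ 1 :=
    MeasureTheory.setIntegral_nonneg measurableSet_Ioi
      fun τ hτ => Real.rpowIntegrand₀₁_nonneg hp.1 (le_of_lt hτ) zero_le_one
  rcases h0.eq_or_lt with h1 | h1
  · rw [← h1] at h
    simp at h
  · exact h1

/-- the parallel-sum double sum -/
noncomputable def psum {A : Matrix n n ℂ} (hA : A.IsHermitian) {B : Matrix m m ℂ} (hB : B.IsHermitian)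
    (L : Matrix n m ℂ) (τ : ℝ) : ℝ :=
  ∑ j, ∑ k, Complex.normSq (((hA.eigenvectorUnitary : Matrix n n ℂ)ᴴ * L *
        (hB.eigenvectorUnitary : Matrix m m ℂ)) j k) * (hA.eigenvalues j * hB.eigenvalues k /
          (hA.eigenvalues j + τ * hB.eigenvalues k))

lemma qf_form {A : Matrix n n ℂ} (hA : A.IsHermitian) {B : Matrix m m ℂ} (hB : B.IsHermitian)
    (X Y : Matrix n m ℂ) (τ : ℝ) :
    τ⁻¹ * (Matrix.trace (Xᴴ * A * X)).re + (Matrix.trace (Yᴴ * Y * B)).re =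
    ∑ j, ∑ k, (τ⁻¹ * (Complex.normSq (((hA.eigenvectorUnitary : Matrix n n ℂ)ᴴ * X *
        (hB.eigenvectorUnitary : Matrix m m ℂ)) j k) * hA.eigenvalues j) +
        Complex.normSq (((hA.eigenvectorUnitary : Matrix n n ℂ)ᴴ * Y *
        (hB.eigenvectorUnitary : Matrix m m ℂ)) j k) * hB.eigenvalues k) := by
  have hA' : IsSelfAdjoint A := hA
  have hB' : IsSelfAdjoint B := hB
  have h1 := dbl hA hB id (fun _ => 1) X
  have h2 := dbl hA hB (fun _ => 1) id Y
  rw [cfc_id ℝ A, cfc_const_one ℝ B] at h1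
  rw [cfc_id ℝ B, cfc_const_one ℝ A] at h2
  simp only [Matrix.mul_one, mul_one, one_mul, id] at h1 h2
  rw [h1, h2]
  simp only [Finset.sum_add_distrib, Finset.mul_sum]

lemma scal_par {a d τ : ℝ} (ha : 0 ≤ a) (hd : 0 ≤ d) (hτ : 0 < τ) (x y : ℂ) :
    Complex.normSq (x + y) * (a * d / (a + τ * d)) ≤
      τ⁻¹ * (Complex.normSq x * a) + Complex.normSq y * d := by
  have h0 : 0 ≤ a + τ * d := by positivity
  rcases h0.eq_or_lt with h | h
  · rw [← h]
    simp only [div_zero, mul_zero]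
    have := Complex.normSq_nonneg x
    have := Complex.normSq_nonneg y
    positivity
  simp only [Complex.normSq_eq_norm_sq]
  have h1 : ‖x + y‖ ^ 2 ≤ (‖x‖ + ‖y‖) ^ 2 := by
    gcongr
    exact norm_add_le x y
  calc ‖x + y‖ ^ 2 * (a * d / (a + τ * d)) ≤ (‖x‖ + ‖y‖) ^ 2 * (a * d / (a + τ * d)) := by
        gcongr
    _ ≤ _ := by
        rw [← mul_div_assoc, div_le_iff₀ h]
        have h3 : (τ⁻¹ * (‖x‖ ^ 2 * a) + ‖y‖ ^ 2 * d) * (a + τ * d) -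
          (‖x‖ + ‖y‖) ^ 2 * (a * d) = τ⁻¹ * (‖x‖ * a - τ * ‖y‖ * d) ^ 2 := by
          field_simp
          ring
        have : 0 ≤ τ⁻¹ * (‖x‖ * a - τ * ‖y‖ * d) ^ 2 := by positivity
        linarith

lemma psum_le {A : Matrix n n ℂ} (hA : A.PosSemidef) {B : Matrix m m ℂ} (hB : B.PosSemidef)
    (X Y : Matrix n m ℂ) {τ : ℝ} (hτ : 0 < τ) :
    psum hA.1 hB.1 (X + Y) τ ≤ 
      τ⁻¹ * (Matrix.trace (Xᴴ * A * X)).re + (Matrix.trace (Yᴴ * Y * B)).re := by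
  rw [qf_form hA.1 hB.1]
  unfold psum
  refine Finset.sum_le_sum fun j _ => Finset.sum_le_sum fun k _ => ?_
  rw [Matrix.mul_add, Matrix.add_mul, Matrix.add_apply]
  exact scal_par (hA.eigenvalues_nonneg j) (hB.eigenvalues_nonneg k) hτ _ _

lemma psum_eq {A : Matrix n n ℂ} (hA : A.PosSemidef) {B : Matrix m m ℂ} (hB : B.PosSemidef)
    (L : Matrix n m ℂ) {τ : ℝ} (hτ : 0 < τ) : ∃ X Y, X + Y = L ∧
    psum hA.1 hB.1 L τ =
      τ⁻¹ * (Matrix.trace (Xᴴ * A * X)).re + (Matrix.trace (Yᴴ * Y * B)).re := by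
  set U := (hA.1.eigenvectorUnitary : Matrix n n ℂ) with hU
  set V := (hB.1.eigenvectorUnitary : Matrix m m ℂ) with hV
  set M := Uᴴ * L * V with hM
  let x : Matrix n m ℂ := Matrix.of fun j k => M j k * 
    ((τ * hB.1.eigenvalues k / (hA.1.eigenvalues j + τ * hB.1.eigenvalues k) : ℝ) : ℂ)
  refine ⟨U * x * Vᴴ, L - U * x * Vᴴ, by abel, ?_⟩
  have e1 : Uᴴ * (U * x * Vᴴ) * V = x := by
    have a1 := uu' hA.1
    have a2 := uu' hB.1
    calc Uᴴ * (U * x * Vᴴ) * V = (Uᴴ * U) * x * (Vᴴ * V) := by simp only [Matrix.mul_assoc]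
      _ = x := by rw [a1, a2]; simp
  rw [qf_form hA.1 hB.1]
  unfold psum
  rw [← hU, ← hV, Matrix.mul_sub, Matrix.sub_mul, e1, ← hM]
  refine Finset.sum_congr rfl fun j _ => Finset.sum_congr rfl fun k _ => ?_
  have ha := hA.eigenvalues_nonneg j
  have hd := hB.eigenvalues_nonneg k
  rw [Matrix.sub_apply]
  simp only [x, Matrix.of_apply]
  generalize hA.1.eigenvalues j = a at *
  generalize hB.1.eigenvalues k = d at *
  have h0 : 0 ≤ a + τ * d := by positivity
  rcases h0.eq_or_lt with h | h
  · have h5 : 0 ≤ τ * d := by positivity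
    have h3 : a = 0 := by linarith
    have h4 : τ * d = 0 := by linarith
    have h6 : d = 0 := by rcases mul_eq_zero.1 h4 with h | h <;> linarith
    subst h3; subst h6
    simp
  · rw [← mul_one_sub]
    rw [show (1 - ((τ * d / (a + τ * d) : ℝ) : ℂ)) = ((a / (a + τ * d) : ℝ) : ℂ) by
      rw [← Complex.ofReal_one, ← Complex.ofReal_sub]; congr 1; field_simp; ring]
    rw [Complex.normSq_mul, Complex.normSq_mul, Complex.normSq_ofReal, Complex.normSq_ofReal]
    have h9 : a + d * τ ≠ 0 := by rw [mul_comm]; exact h.ne'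
    field_simp
    ring

lemma qf_concave {A0 A1 At : Matrix n n ℂ} {t : ℝ}
    (h : (At - (t • A0 + (1 - t) • A1)).PosSemidef) (X : Matrix n m ℂ) :
    t * (Matrix.trace (Xᴴ * A0 * X)).re + (1 - t) * (Matrix.trace (Xᴴ * A1 * X)).re ≤
      (Matrix.trace (Xᴴ * At * X)).re := by
  have h1 := psd_tr_nonneg (h.conjTranspose_mul_mul_same X)
  simp only [Matrix.mul_sub, Matrix.sub_mul, Matrix.mul_add, Matrix.add_mul, Matrix.mul_smul,
    Matrix.smul_mul, Matrix.trace_sub, Matrix.trace_add, Matrix.trace_smul, Complex.sub_re,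
    Complex.add_re, Complex.smul_re, smul_eq_mul] at h1
  linarith

lemma tr_concave {A0 A1 At : Matrix n n ℂ} {t : ℝ}
    (h : (At - (t • A0 + (1 - t) • A1)).PosSemidef) {X : Matrix n n ℂ} (hX : X.PosSemidef) :
    t * (Matrix.trace (X * A0)).re + (1 - t) * (Matrix.trace (X * A1)).re ≤
      (Matrix.trace (X * At)).re := by
  have h1 := tr_mul_nonneg hX h
  simp only [Matrix.mul_sub, Matrix.mul_add, Matrix.mul_smul,
    Matrix.trace_sub, Matrix.trace_add, Matrix.trace_smul, Complex.sub_re,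
    Complex.add_re, Complex.smul_re, smul_eq_mul] at h1
  linarith

lemma psum_concave {A0 A1 At : Matrix n n ℂ} {B0 B1 Bt : Matrix m m ℂ} {t : ℝ}
    (ht0 : 0 ≤ t) (ht1 : t ≤ 1)
    (hA0 : A0.PosSemidef) (hA1 : A1.PosSemidef) (hAt : At.PosSemidef)
    (hB0 : B0.PosSemidef) (hB1 : B1.PosSemidef) (hBt : Bt.PosSemidef)
    (hA : (At - (t • A0 + (1 - t) • A1)).PosSemidef)
    (hB : (Bt - (t • B0 + (1 - t) • B1)).PosSemidef) (L : Matrix n m ℂ) {τ : ℝ} (hτ : 0 < τ) :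
    t * psum hA0.1 hB0.1 L τ + (1 - t) * psum hA1.1 hB1.1 L τ ≤ psum hAt.1 hBt.1 L τ := by
  obtain ⟨X, Y, rfl, h⟩ := psum_eq hAt hBt L hτ
  rw [h]
  have h0 := psum_le hA0 hB0 X Y hτ
  have h1 := psum_le hA1 hB1 X Y hτ
  have h2 := qf_concave hA X
  have h3 := tr_concave hB (Matrix.posSemidef_conjTranspose_mul_self Y)
  have h4 : 0 < τ⁻¹ := by positivity
  have h5 := mul_le_mul_of_nonneg_left h2 h4.le
  have h6 := mul_le_mul_of_nonneg_left h0 ht0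
  have h7 := mul_le_mul_of_nonneg_left h1 (sub_nonneg.2 ht1)
  linarith

lemma lieb_int {A : Matrix n n ℂ} (hA : A.PosSemidef) {B : Matrix m m ℂ} (hB : B.PosSemidef)
    (L : Matrix n m ℂ) {p : ℝ} (hp : p ∈ Set.Ioo (0:ℝ) 1) :
    MeasureTheory.IntegrableOn (fun τ : ℝ => τ ^ (p - 1) * psum hA.1 hB.1 L τ) (Set.Ioi 0) ∧
    (∫ τ in Set.Ioi (0:ℝ), τ ^ (p - 1) * psum hA.1 hB.1 L τ) =
      (∫ τ in Set.Ioi (0:ℝ), Real.rpowIntegrand₀₁ p τ 1) * 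
       (Matrix.trace (Lᴴ * mp A p * L * mp B (1 - p))).re := by
  have e : (fun τ : ℝ => τ ^ (p - 1) * psum hA.1 hB.1 L τ) = fun τ => 
    ∑ j, ∑ k, Complex.normSq (((hA.1.eigenvectorUnitary : Matrix n n ℂ)ᴴ * L *
        (hB.1.eigenvectorUnitary : Matrix m m ℂ)) j k) * 
        (τ ^ (p - 1) * (hA.1.eigenvalues j * hB.1.eigenvalues k /
          (hA.1.eigenvalues j + τ * hB.1.eigenvalues k))) := by
    ext τ
    unfold psum
    simp only [Finset.mul_sum]
    refine Finset.sum_congr rfl fun j _ => Finset.sum_congr rfl fun k _ => by ring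
  have hi : ∀ j k, MeasureTheory.IntegrableOn (fun τ : ℝ => Complex.normSq (((hA.1.eigenvectorUnitary : Matrix n n ℂ)ᴴ * L *
        (hB.1.eigenvectorUnitary : Matrix m m ℂ)) j k) * 
        (τ ^ (p - 1) * (hA.1.eigenvalues j * hB.1.eigenvalues k /
          (hA.1.eigenvalues j + τ * hB.1.eigenvalues k)))) (Set.Ioi 0) := fun j k =>
    (scal_int hp (hA.eigenvalues_nonneg j) (hB.eigenvalues_nonneg k)).1.const_mul _
  rw [e]
  refine ⟨MeasureTheory.integrable_finsetSum _ fun j _ => 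
    MeasureTheory.integrable_finsetSum _ fun k _ => hi j k, ?_⟩
  rw [MeasureTheory.integral_finsetSum _ fun j _ => 
    MeasureTheory.integrable_finsetSum _ fun k _ => hi j k]
  unfold mp
  rw [dbl hA.1 hB.1, Finset.mul_sum]
  refine Finset.sum_congr rfl fun j _ => ?_
  rw [MeasureTheory.integral_finsetSum _ fun k _ => hi j k, Finset.mul_sum]
  refine Finset.sum_congr rfl fun k _ => ?_
  rw [MeasureTheory.integral_const_mul, 
    (scal_int hp (hA.eigenvalues_nonneg j) (hB.eigenvalues_nonneg k)).2]
  ring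

lemma lieb_core {A0 A1 At : Matrix n n ℂ} {B0 B1 Bt : Matrix m m ℂ} {t : ℝ}
    (ht0 : 0 ≤ t) (ht1 : t ≤ 1)
    (hA0 : A0.PosSemidef) (hA1 : A1.PosSemidef) (hAt : At.PosSemidef)
    (hB0 : B0.PosSemidef) (hB1 : B1.PosSemidef) (hBt : Bt.PosSemidef)
    (hA : (At - (t • A0 + (1 - t) • A1)).PosSemidef)
    (hB : (Bt - (t • B0 + (1 - t) • B1)).PosSemidef) (L : Matrix n m ℂ)
    {p : ℝ} (hp : p ∈ Set.Ioo (0:ℝ) 1) :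
    t * (Matrix.trace (Lᴴ * mp A0 p * L * mp B0 (1 - p))).re + 
      (1 - t) * (Matrix.trace (Lᴴ * mp A1 p * L * mp B1 (1 - p))).re ≤
      (Matrix.trace (Lᴴ * mp At p * L * mp Bt (1 - p))).re := by
  have i0 := lieb_int hA0 hB0 L hp
  have i1 := lieb_int hA1 hB1 L hp
  have it := lieb_int hAt hBt L hp
  have hc := scal_pos hp
  refine le_of_mul_le_mul_left ?_ hc
  rw [mul_add, mul_left_comm, ← i0.2, mul_left_comm, ← i1.2, ← it.2,
    ← MeasureTheory.integral_const_mul, ← MeasureTheory.integral_const_mul,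
    ← MeasureTheory.integral_add (i0.1.const_mul t) (i1.1.const_mul (1 - t))]
  refine MeasureTheory.setIntegral_mono_on ((i0.1.const_mul t).add (i1.1.const_mul (1 - t)))
    it.1 measurableSet_Ioi fun τ hτ => ?_
  have h := psum_concave ht0 ht1 hA0 hA1 hAt hB0 hB1 hBt hA hB L hτ
  have h2 : 0 ≤ τ ^ (p - 1) := Real.rpow_nonneg (le_of_lt hτ) _
  have := mul_le_mul_of_nonneg_left h h2
  calc _ = τ ^ (p - 1) * (t * psum hA0.1 hB0.1 L τ + (1 - t) * psum hA1.1 hB1.1 L τ) := by ring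
    _ ≤ _ := this

end lieb

section partthree

variable {n m : Type*} [Fintype n] [DecidableEq n] [Fintype m] [DecidableEq m]

lemma mp_one_left (t : ℝ) : mp (1 : Matrix n n ℂ) t = 1 := by
  have h := mp_mp (A := (1 : Matrix n n ℂ)) Matrix.PosSemidef.one 0 t
  rw [zero_mul, mp_zero Matrix.isHermitian_one] at h
  exact h

lemma psd_comb {A B : Matrix n n ℂ} (hA : A.PosSemidef) (hB : B.PosSemidef) {t : ℝ}
    (ht0 : 0 ≤ t) (ht1 : t ≤ 1) : (t • A + (1 - t) • B).PosSemidef :=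
  (hA.smul ht0).add (hB.smul (sub_nonneg.2 ht1))

lemma psd_self_sub (A : Matrix n n ℂ) : (A - A).PosSemidef := by
  rw [sub_self]; exact Matrix.PosSemidef.zero

lemma op_concave {A0 A1 At : Matrix n n ℂ} {t : ℝ}
    (ht0 : 0 ≤ t) (ht1 : t ≤ 1)
    (hA0 : A0.PosSemidef) (hA1 : A1.PosSemidef) (hAt : At.PosSemidef)
    (hA : (At - (t • A0 + (1 - t) • A1)).PosSemidef) {w : ℝ} (hw0 : 0 ≤ w) (hw1 : w ≤ 1) :
    (mp At w - (t • mp A0 w + (1 - t) • mp A1 w)).PosSemidef := by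
  rcases hw0.eq_or_lt with rfl | hw0
  · rw [mp_zero hAt.1, mp_zero hA0.1, mp_zero hA1.1, ← add_smul]
    simp [Matrix.PosSemidef.zero]
  rcases hw1.eq_or_lt with rfl | hw1
  · rw [mp_one hAt.1, mp_one hA0.1, mp_one hA1.1]
    exact hA
  have hH : (mp At w - (t • mp A0 w + (1 - t) • mp A1 w)).IsHermitian := by
    unfold Matrix.IsHermitian
    simp only [Matrix.conjTranspose_sub, Matrix.conjTranspose_add, Matrix.conjTranspose_smul,
      mp_herm, star_trivial]
  refine Matrix.PosSemidef.of_dotProduct_mulVec_nonneg hH fun x => ?_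
  have h := lieb_core ht0 ht1 hA0 hA1 hAt (Matrix.PosSemidef.one (n := Unit) (R := ℂ))
    Matrix.PosSemidef.one Matrix.PosSemidef.one hA (by
      rw [← add_smul]; simp [Matrix.PosSemidef.zero]) (Matrix.replicateCol Unit x) ⟨hw0, hw1⟩
  simp only [mp_one_left, Matrix.mul_one] at h
  have e : ∀ M : Matrix n n ℂ, Matrix.trace ((Matrix.replicateCol Unit x)ᴴ * M * Matrix.replicateCol Unit x)
      = star x ⬝ᵥ (M *ᵥ x) := by
    intro M
    simp [Matrix.trace, Matrix.mul_apply, dotProduct, Matrix.mulVec, Finset.mul_sum, Finset.sum_mul]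
    rw [Finset.sum_comm]
    refine Finset.sum_congr rfl fun j _ => Finset.sum_congr rfl fun k _ => by ring
  simp only [e] at h
  rw [Complex.nonneg_iff]
  constructor
  · simp only [Matrix.sub_mulVec, Matrix.add_mulVec, Matrix.smul_mulVec, dotProduct_sub, dotProduct_add,
      dotProduct_smul, Complex.sub_re, Complex.add_re, Complex.smul_re, smul_eq_mul]
    linarith
  · exact (hH.im_star_dotProduct_mulVec_self x).symm

lemma lieb {A0 A1 At : Matrix n n ℂ} {B0 B1 Bt : Matrix m m ℂ} {t : ℝ}
    (ht0 : 0 ≤ t) (ht1 : t ≤ 1)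
    (hA0 : A0.PosSemidef) (hA1 : A1.PosSemidef) (hAt : At.PosSemidef)
    (hB0 : B0.PosSemidef) (hB1 : B1.PosSemidef) (hBt : Bt.PosSemidef)
    (hA : (At - (t • A0 + (1 - t) • A1)).PosSemidef)
    (hB : (Bt - (t • B0 + (1 - t) • B1)).PosSemidef) (L : Matrix n m ℂ)
    {p w : ℝ} (hp : 0 ≤ p) (hw : 0 ≤ w) (hpw : p + w ≤ 1) :
    t * (Matrix.trace (Lᴴ * mp A0 p * L * mp B0 w)).re + 
      (1 - t) * (Matrix.trace (Lᴴ * mp A1 p * L * mp B1 w)).re ≤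
      (Matrix.trace (Lᴴ * mp At p * L * mp Bt w)).re := by
  rcases hp.eq_or_lt with rfl | hp
  · rw [mp_zero hAt.1, mp_zero hA0.1, mp_zero hA1.1]
    simp only [Matrix.mul_one]
    exact tr_concave (op_concave ht0 ht1 hB0 hB1 hBt hB hw (by linarith))
      (Matrix.posSemidef_conjTranspose_mul_self L)
  have hp1 : p ≤ 1 := by linarith
  rcases hp1.eq_or_lt with rfl | hp1
  · have : w = 0 := by linarith
    subst this
    rw [mp_zero hBt.1, mp_zero hB0.1, mp_zero hB1.1, mp_one hAt.1, mp_one hA0.1, mp_one hA1.1]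
    simp only [Matrix.mul_one]
    exact qf_concave hA L
  have h1 : 0 < 1 - p := by linarith
  have h := lieb_core ht0 ht1 hA0 hA1 hAt (mp_psd hB0 (w / (1 - p))) (mp_psd hB1 (w / (1 - p)))
    (mp_psd hBt (w / (1 - p))) hA 
    (op_concave ht0 ht1 hB0 hB1 hBt hB (by positivity) (by rw [div_le_one h1]; linarith)) L ⟨hp, hp1⟩
  rw [mp_mp hB0, mp_mp hB1, mp_mp hBt, div_mul_cancel₀ _ h1.ne'] at h
  exact h

lemma young {X U : Matrix n n ℂ} (hX : X.PosSemidef) (hU : U.PosSemidef) {c : ℝ} (hc : 1 ≤ c) :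
    c * (Matrix.trace (X * mp U (1 - 1 / c))).re ≤ tp X c + (c - 1) * (Matrix.trace U).re := by
  have hX' : IsSelfAdjoint X := hX.1
  have hU' : IsSelfAdjoint U := hU.1
  have h1 := dbl hX.1 hU.1 id (fun x => x ^ (1 - 1 / c)) 1
  have h2 := dbl hX.1 hU.1 (fun x => x ^ c) (fun _ => 1) 1
  have h3 := dbl hX.1 hU.1 (fun _ => 1) id 1
  rw [cfc_id ℝ X] at h1
  rw [cfc_const_one ℝ U] at h2
  rw [cfc_id ℝ U, cfc_const_one ℝ X] at h3
  simp only [Matrix.conjTranspose_one, one_mul, mul_one] at h1 h2 h3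
  unfold tp mp
  rw [h1, h2, h3]
  simp only [Finset.mul_sum, ← Finset.sum_add_distrib]
  refine Finset.sum_le_sum fun j _ => Finset.sum_le_sum fun k _ => ?_
  have ha := hX.eigenvalues_nonneg j
  have hb := hU.eigenvalues_nonneg k
  simp only [id]
  generalize hX.1.eigenvalues j = x at *
  generalize hU.1.eigenvalues k = u at *
  have hc0 : 0 < c := by linarith
  have h1c : 1 / c ≤ 1 := by rw [div_le_one hc0]; exact hc
  have h := Real.geom_mean_le_arith_mean2_weighted (w₁ := 1 / c) (w₂ := 1 - 1 / c)
    (p₁ := x ^ c) (p₂ := u) (by positivity) (by linarith) (by positivity) hb (by ring)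
  rw [← Real.rpow_mul ha, mul_one_div_cancel hc0.ne', Real.rpow_one] at h
  have h4 : c * (x * u ^ (1 - 1 / c)) ≤ x ^ c + (c - 1) * u := by
    have := mul_le_mul_of_nonneg_left h hc0.le
    have e : c * (1 / c * x ^ c + (1 - 1 / c) * u) = x ^ c + (c - 1) * u := by field_simp
    linarith
  have := mul_le_mul_of_nonneg_left h4 (Complex.normSq_nonneg ((((hX.1.eigenvectorUnitary : Matrix n n ℂ)ᴴ * (hU.1.eigenvectorUnitary : Matrix n n ℂ)) j k)))
  linarith

lemma young_eq {X : Matrix n n ℂ} (hX : X.PosSemidef) {c : ℝ} (hc : 1 ≤ c) :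
    c * (Matrix.trace (X * mp (mp X c) (1 - 1 / c))).re = 
      tp X c + (c - 1) * (Matrix.trace (mp X c)).re := by
  have hc0 : 0 < c := by linarith
  rw [mp_mp hX, show c * (1 - 1 / c) = c - 1 by field_simp]
  nth_rewrite 1 [← mp_one hX.1]
  rw [mp_mul hX zero_le_one (by linarith)]
  unfold tp
  rw [show 1 + (c - 1) = c by ring]
  ring

lemma sum_psd {ι : Type*} [Fintype ι] (L : ι → Matrix n m ℂ) {X : Matrix n n ℂ} (hX : X.PosSemidef) :
    (∑ i, (L i)ᴴ * X * L i).PosSemidef :=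
  Matrix.posSemidef_sum _ fun i _ => hX.conjTranspose_mul_mul_same (L i)

lemma elem {ι : Type*} [Fintype ι] (L : ι → Matrix n m ℂ) {A0 A1 At : Matrix n n ℂ} {t : ℝ}
    (ht0 : 0 ≤ t) (ht1 : t ≤ 1)
    (hA0 : A0.PosSemidef) (hA1 : A1.PosSemidef) (hAt : At.PosSemidef)
    (hA : (At - (t • A0 + (1 - t) • A1)).PosSemidef) {p c : ℝ} (hp : 0 ≤ p) (hc : 1 ≤ c)
    (hpc : p * c ≤ 1) :
    t * tp (∑ i, (L i)ᴴ * mp A0 p * L i) c + (1 - t) * tp (∑ i, (L i)ᴴ * mp A1 p * L i) c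
      ≤ tp (∑ i, (L i)ᴴ * mp At p * L i) c := by
  have hc0 : 0 < c := by linarith
  have P0 := sum_psd L (mp_psd hA0 p)
  have P1 := sum_psd L (mp_psd hA1 p)
  have Pt := sum_psd L (mp_psd hAt p)
  have e0 := young_eq P0 hc
  have e1 := young_eq P1 hc
  have U0 := mp_psd P0 c
  have U1 := mp_psd P1 c
  have Ut := psd_comb U0 U1 ht0 ht1
  have et := young Pt Ut hc
  have tt : ∀ (M : Matrix n n ℂ) (V : Matrix m m ℂ), (Matrix.trace ((∑ i, (L i)ᴴ * M * L i) * V)).re = 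
      ∑ i, (Matrix.trace ((L i)ᴴ * M * L i * V)).re := by
    intro M V
    rw [Finset.sum_mul, Matrix.trace_sum, Complex.re_sum]
  have hw : 0 ≤ 1 - 1 / c := by
    rw [sub_nonneg, div_le_one hc0]; exact hc
  have hw' : p + (1 - 1 / c) ≤ 1 := by
    have : p ≤ 1 / c := by rw [le_div_iff₀ hc0]; exact hpc
    linarith
  have hl := Finset.sum_le_sum fun i (_ : i ∈ Finset.univ) => 
    lieb ht0 ht1 hA0 hA1 hAt U0 U1 Ut hA (psd_self_sub _) (L i) hp hw hw'
  rw [Finset.sum_add_distrib, ← Finset.mul_sum, ← Finset.mul_sum, ← tt, ← tt, ← tt] at hl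
  simp only [Matrix.trace_add, Matrix.trace_smul, Complex.add_re, Complex.smul_re, smul_eq_mul] at et
  have := mul_le_mul_of_nonneg_left hl hc0.le
  nlinarith

lemma tp_convex {Y0 Y1 Y : Matrix n n ℂ} {t : ℝ}
    (ht0 : 0 ≤ t) (ht1 : t ≤ 1)
    (h0 : Y0.PosSemidef) (h1 : Y1.PosSemidef) (hY : Y.PosSemidef)
    (h : ((t • Y0 + (1 - t) • Y1) - Y).PosSemidef) {c : ℝ} (hc : 1 ≤ c) :
    tp Y c ≤ t * tp Y0 c + (1 - t) * tp Y1 c := by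
  have hc0 : 0 < c := by linarith
  have e := young_eq hY hc
  have U := mp_psd hY c
  have e0 := young h0 U hc
  have e1 := young h1 U hc
  have h3 := tr_mul_nonneg h (mp_psd U (1 - 1 / c))
  simp only [Matrix.sub_mul, Matrix.add_mul, Matrix.smul_mul,
    Matrix.trace_sub, Matrix.trace_add, Matrix.trace_smul, Complex.sub_re,
    Complex.add_re, Complex.smul_re, smul_eq_mul] at h3
  have a0 := mul_le_mul_of_nonneg_left e0 ht0
  have a1 := mul_le_mul_of_nonneg_left e1 (sub_nonneg.2 ht1)
  have a2 := mul_nonneg hc0.le h3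
  nlinarith

lemma divk {k x y z : ℝ} (hk : 0 < k) (h : k * x ≤ y + (k - 1) * z) :
    x ≤ 1 / k * y + (1 - 1 / k) * z := by
  have : 1 / k * y + (1 - 1 / k) * z = (y + (k - 1) * z) / k := by field_simp
  rw [this, le_div_iff₀ hk]
  linarith

lemma zhang {N P : Matrix n n ℂ} (hN : N.PosSemidef) (hP : P.PosDef) {a b s : ℝ} (hs : 0 < s)
    (ha : 1 ≤ a) (hb : 1 ≤ b) (h : 1 / a + 1 / b = 1 / s) :
    (1 / s) * tp N s ≤ (1 / a) * tp P a + (1 / b) * tp (mp N (1/2) * mp P (-1) * mp N (1/2)) b := by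
  have ha0 : 0 < a := by linarith
  have hb0 : 0 < b := by linarith
  have h1a : s / a ≤ s := div_le_self hs.le ha
  have h1b : s / b ≤ s := div_le_self hs.le hb
  have hab : s / a + s / b = 1 := by
    have := congrArg (fun x => s * x) h
    simp only [mul_add, mul_one_div, div_self hs.ne'] at this
    exact this
  have hs1 : 0 ≤ s / a := by positivity
  have U := mp_psd hN s
  have Y : (mp N (1/2) * mp P (-1) * mp N (1/2)).PosSemidef := by
    have := (mp_pd hP (-1)).posSemidef.conjTranspose_mul_mul_same (mp N (1/2))
    rwa [mp_herm] at this
  have e0 := young hP.posSemidef U ha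
  have e1 := young Y U hb
  rw [mp_mp hN] at e0 e1
  have hsb : 0 ≤ s * (1 - 1 / b) := by rw [mul_one_sub, mul_one_div]; linarith
  have t1 : (Matrix.trace (mp N (1/2) * mp P (-1) * mp N (1/2) * mp N (s * (1 - 1 / b)))).re =
      (Matrix.trace (mp P (-1) * mp N (s + s / a))).re := by
    rw [mul_assoc, mul_assoc, Matrix.trace_mul_comm, mul_assoc, mul_assoc,
      mp_mul hN hsb (by norm_num), mp_mul hN (by norm_num) (by linarith)]
    congr 4
    rw [mul_one_sub, mul_one_div]
    linarith
  rw [t1] at e1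
  set Z := mp P (1/2) * mp N ((s - s / a) / 2) - mp P (-(1/2)) * mp N ((s + s / a) / 2) with hZ
  have hz := psd_tr_nonneg (Matrix.posSemidef_conjTranspose_mul_self Z)
  have ez : Zᴴ * Z = mp N ((s - s / a) / 2) * P * mp N ((s - s / a) / 2) + 
      mp N ((s + s / a) / 2) * mp P (-1) * mp N ((s + s / a) / 2) - mp N s - mp N s := by
    have c1 : mp P (1/2) * mp P (1/2) = P := by
      rw [mp_mul_pd hP]; norm_num; exact mp_one hP.1
    have c2 : mp P (-(1/2)) * mp P (-(1/2)) = mp P (-1) := by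
      rw [mp_mul_pd hP]; norm_num
    have c3 : mp P (1/2) * mp P (-(1/2)) = 1 := by
      rw [mp_mul_pd hP]; norm_num; exact mp_zero hP.1
    have c4 : mp P (-(1/2)) * mp P (1/2) = 1 := by
      rw [mp_mul_pd hP]; norm_num; exact mp_zero hP.1
    have c5 : mp N ((s - s / a) / 2) * mp N ((s + s / a) / 2) = mp N s := by
      rw [mp_mul hN (by linarith) (by linarith)]; congr 1; ring
    have c6 : mp N ((s + s / a) / 2) * mp N ((s - s / a) / 2) = mp N s := by
      rw [mp_mul hN (by linarith) (by linarith)]; congr 1; ring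
    rw [hZ]
    simp only [Matrix.conjTranspose_sub, Matrix.conjTranspose_mul, mp_herm]
    set x := mp N ((s - s / a) / 2)
    set y := mp N ((s + s / a) / 2)
    set u := mp P (1/2)
    set v := mp P (-(1/2))
    calc (x * u - y * v) * (u * x - v * y) = x * (u * u) * x + y * (v * v) * y -
         x * (u * v) * y - y * (v * u) * x := by noncomm_ring
      _ = _ := by rw [c1, c2, c3, c4, mul_one, mul_one, c5, c6]
  rw [ez] at hz
  simp only [Matrix.trace_sub, Matrix.trace_add, Complex.sub_re, Complex.add_re] at hz
  have t2 : (Matrix.trace (mp N ((s - s / a) / 2) * P * mp N ((s - s / a) / 2))).re = 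
      (Matrix.trace (P * mp N (s * (1 - 1 / a)))).re := by
    rw [mul_assoc, Matrix.trace_mul_comm, mul_assoc, mp_mul hN (by linarith) (by linarith)]
    congr 4
    rw [mul_one_sub, mul_one_div]; ring
  have t3 : (Matrix.trace (mp N ((s + s / a) / 2) * mp P (-1) * mp N ((s + s / a) / 2))).re = 
      (Matrix.trace (mp P (-1) * mp N (s + s / a))).re := by
    rw [mul_assoc, Matrix.trace_mul_comm, mul_assoc, mp_mul hN (by linarith) (by linarith)]
    congr 4
    ring
  rw [t2, t3] at hz
  have f0 := divk ha0 e0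
  have f1 := divk hb0 e1
  rw [← h]
  have : tp N s = (Matrix.trace (mp N s)).re := rfl
  rw [this]
  nlinarith

lemma zhang_eq {N : Matrix n n ℂ} (hN : N.PosDef) {a b s : ℝ} (hs : 0 < s)
    (ha : 1 ≤ a) (hb : 1 ≤ b) (h : 1 / a + 1 / b = 1 / s) :
    (1 / s) * tp N s = (1 / a) * tp (mp N (s / a)) a + 
      (1 / b) * tp (mp N (1/2) * mp (mp N (s / a)) (-1) * mp N (1/2)) b := by
  have ha0 : 0 < a := by linarith
  have hb0 : 0 < b := by linarith
  have hab : s / a + s / b = 1 := by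
    have := congrArg (fun x => s * x) h
    simp only [mul_add, mul_one_div, div_self hs.ne'] at this
    exact this
  rw [mp_mp hN.posSemidef, mp_mul_pd hN, mp_mul_pd hN]
  unfold tp
  rw [mp_mp hN.posSemidef, mp_mp hN.posSemidef, div_mul_cancel₀ _ ha0.ne',
    show (1 / 2 + s / a * -1 + 1 / 2) = s / b by linarith, div_mul_cancel₀ _ hb0.ne', ← h]
  ring

end partthree

section partfour

variable {n m : Type*} [Fintype n] [DecidableEq n] [Fintype m] [DecidableEq m]

lemma tp_swap (Y : Matrix n n ℂ) (c : ℝ) : tp (Yᴴ * Y) c = tp (Y * Yᴴ) c :=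
  tp_charpoly (Matrix.isHermitian_conjTranspose_mul_self Y) (Matrix.isHermitian_mul_conjTranspose_self Y)
    (Matrix.charpoly_mul_comm _ _) c

lemma mp_half_sq {A : Matrix n n ℂ} (hA : A.PosSemidef) : mp A (1/2) * mp A (1/2) = A := by
  rw [mp_mul hA (by norm_num) (by norm_num)]
  norm_num
  exact mp_one hA.1

lemma mp_halves {A : Matrix n n ℂ} (hA : A.PosSemidef) {q : ℝ} (hq : 0 ≤ q) :
    mp A (q/2) * mp A (q/2) = mp A q := by
  rw [mp_mul hA (by linarith) (by linarith)]
  congr 1; ring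

lemma mp_neg_mul {A : Matrix n n ℂ} (hA : A.PosDef) : mp A (-1) * A = 1 := by
  nth_rewrite 2 [← mp_one hA.1]
  rw [mp_mul_pd hA]
  norm_num
  exact mp_zero hA.1

lemma mp_neg_unique {A B : Matrix n n ℂ} (hA : A.PosDef) (h : B * A = 1) : mp A (-1) = B := by
  have h1 : A * B = 1 := mul_eq_one_comm.1 h
  calc mp A (-1) = mp A (-1) * (A * B) := by rw [h1, mul_one]
    _ = B := by rw [← mul_assoc, mp_neg_mul hA, one_mul]

lemma conj_psd {M : Matrix n n ℂ} (hM : M.PosSemidef) {W : Matrix n n ℂ} (hW : Wᴴ = W) :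
    (W * M * W).PosSemidef := by
  have := hM.conjTranspose_mul_mul_same W
  rwa [hW] at this

lemma conj_pd {M : Matrix n n ℂ} (hM : M.PosDef) {X X' : Matrix n n ℂ} (hX : X * X' = 1) :
    (X * M * Xᴴ).PosDef :=
  hM.mul_mul_conjTranspose_same (Matrix.vecMul_injective_of_isUnit (IsUnit.of_mul_eq_one _ hX))

lemma conj_pd' {M : Matrix n n ℂ} (hM : M.PosDef) {W : Matrix n n ℂ} (hW : W.PosDef) :
    (W * M * W).PosDef := by
  have h := conj_pd hM (X := W) (X' := mp W (-1)) (mul_eq_one_comm.1 (mp_neg_mul hW))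
  rwa [hW.1.eq] at h

/-- translated terms -/
lemma zt1 (X : Matrix n n ℂ) {P : Matrix n n ℂ} (hP : P.PosSemidef) (a : ℝ) :
    tp (X * P * Xᴴ) a = tp (mp P (1/2) * (Xᴴ * X) * mp P (1/2)) a := by
  have h := tp_swap (X * mp P (1/2)) a
  rw [Matrix.conjTranspose_mul, mp_herm] at h
  rw [show mp P (1/2) * (Xᴴ * X) * mp P (1/2) = mp P (1/2) * Xᴴ * (X * mp P (1/2)) by
    simp only [mul_assoc], h]
  congr 1
  nth_rewrite 1 [← mp_half_sq hP]
  simp only [mul_assoc]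

lemma neg_half_sq {P : Matrix n n ℂ} (hP : P.PosDef) : 
    mp P (-(1/2)) * mp P (-(1/2)) = mp P (-1) := by
  rw [mp_mul_pd hP]; norm_num

lemma zt0 {N P : Matrix n n ℂ} (hN : N.PosSemidef) (hP : P.PosDef) (b : ℝ) :
    tp (mp N (1/2) * mp P (-1) * mp N (1/2)) b = tp (mp P (-(1/2)) * N * mp P (-(1/2))) b := by
  have h := tp_swap (mp P (-(1/2)) * mp N (1/2)) b
  rw [Matrix.conjTranspose_mul, mp_herm, mp_herm] at h
  rw [← neg_half_sq hP]
  nth_rewrite 3 [← mp_half_sq hN]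
  simp only [mul_assoc] at h ⊢
  exact h

lemma zt2 {X X' M P : Matrix n n ℂ} (hX : X * X' = 1) (hM : M.PosSemidef) (hP : P.PosDef) (b : ℝ) :
    tp (mp (X * M * Xᴴ) (1/2) * mp (X * P * Xᴴ) (-1) * mp (X * M * Xᴴ) (1/2)) b = 
      tp (mp P (-(1/2)) * M * mp P (-(1/2))) b := by
  have hX2 : X' * X = 1 := mul_eq_one_comm.1 hX
  have hX3 : Xᴴ * X'ᴴ = 1 := by rw [← Matrix.conjTranspose_mul, hX2, Matrix.conjTranspose_one]
  have hX4 : X'ᴴ * Xᴴ = 1 := mul_eq_one_comm.1 hX3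
  have hN : (X * M * Xᴴ).PosSemidef := hM.mul_mul_conjTranspose_same X
  have hP' : (X * P * Xᴴ).PosDef := conj_pd hP hX
  have hinv : mp (X * P * Xᴴ) (-1) = X'ᴴ * mp P (-1) * X' := by
    apply mp_neg_unique hP'
    calc X'ᴴ * mp P (-1) * X' * (X * P * Xᴴ) = X'ᴴ * mp P (-1) * (X' * X) * P * Xᴴ := by
          simp only [mul_assoc]
      _ = X'ᴴ * (mp P (-1) * P) * Xᴴ := by rw [hX2]; simp only [mul_assoc, one_mul]
      _ = 1 := by rw [mp_neg_mul hP, mul_one, hX4]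
  apply tp_charpoly
  · exact (conj_psd (mp_pd hP' (-1)).posSemidef (mp_herm _ _)).1
  · exact (conj_psd hM (mp_herm _ _)).1
  rw [mul_assoc, Matrix.charpoly_mul_comm, mul_assoc, mp_half_sq hN, hinv,
    show X'ᴴ * mp P (-1) * X' * (X * M * Xᴴ) = X'ᴴ * (mp P (-1) * (X' * X) * M * Xᴴ) by 
      simp only [mul_assoc], Matrix.charpoly_mul_comm, hX2, mul_one, mul_assoc _ Xᴴ, hX3, mul_one,
    mul_assoc (mp P (-(1/2))), Matrix.charpoly_mul_comm (mp P (-(1/2))), mul_assoc M, neg_half_sq hP,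
    Matrix.charpoly_mul_comm M]

lemma zhang' {X X' M P : Matrix n n ℂ} (hX : X * X' = 1) (hM : M.PosSemidef) (hP : P.PosDef)
    {a b s : ℝ} (hs : 0 < s) (ha : 1 ≤ a) (hb : 1 ≤ b) (h : 1 / a + 1 / b = 1 / s) :
    (1 / s) * tp (X * M * Xᴴ) s ≤ (1 / a) * tp (mp P (1/2) * (Xᴴ * X) * mp P (1/2)) a +
      (1 / b) * tp (mp P (-(1/2)) * M * mp P (-(1/2))) b := by
  have := zhang (hM.mul_mul_conjTranspose_same X) (conj_pd hP hX) hs ha hb h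
  rwa [zt2 hX hM hP, zt1 X hP.posSemidef] at this

lemma zhang'_eq {X X' M : Matrix n n ℂ} (hX : X * X' = 1) (hM : M.PosDef)
    {a b s : ℝ} (hs : 0 < s) (ha : 1 ≤ a) (hb : 1 ≤ b) (h : 1 / a + 1 / b = 1 / s) :
    ∃ P : Matrix n n ℂ, P.PosDef ∧ 
    (1 / s) * tp (X * M * Xᴴ) s = (1 / a) * tp (mp P (1/2) * (Xᴴ * X) * mp P (1/2)) a +
      (1 / b) * tp (mp P (-(1/2)) * M * mp P (-(1/2))) b := by
  have hX2 : X' * X = 1 := mul_eq_one_comm.1 hX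
  have hX3 : Xᴴ * X'ᴴ = 1 := by rw [← Matrix.conjTranspose_mul, hX2, Matrix.conjTranspose_one]
  have hX4 : X'ᴴ * Xᴴ = 1 := mul_eq_one_comm.1 hX3
  have hN := conj_pd hM hX
  have hP' := mp_pd hN (s / a)
  have hP := conj_pd hP' hX2
  refine ⟨_, hP, ?_⟩
  rw [zhang_eq hN hs ha hb h]
  have e : mp (X * M * Xᴴ) (s / a) = X * (X' * mp (X * M * Xᴴ) (s / a) * X'ᴴ) * Xᴴ := by
    calc _ = (X * X') * mp (X * M * Xᴴ) (s / a) * (X'ᴴ * Xᴴ) := by rw [hX, hX4, one_mul, mul_one]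
      _ = _ := by simp only [mul_assoc]
  generalize hR : X' * mp (X * M * Xᴴ) (s / a) * X'ᴴ = R at *
  rw [e, zt1 X hP.posSemidef, zt2 hX hM.posSemidef hP]

lemma elem1 (L : Matrix n m ℂ) {A0 A1 At : Matrix n n ℂ} {t : ℝ}
    (ht0 : 0 ≤ t) (ht1 : t ≤ 1)
    (hA0 : A0.PosSemidef) (hA1 : A1.PosSemidef) (hAt : At.PosSemidef)
    (hA : (At - (t • A0 + (1 - t) • A1)).PosSemidef) {p c : ℝ} (hp : 0 ≤ p) (hc : 1 ≤ c)
    (hpc : p * c ≤ 1) :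
    t * tp (Lᴴ * mp A0 p * L) c + (1 - t) * tp (Lᴴ * mp A1 p * L) c
      ≤ tp (Lᴴ * mp At p * L) c := by
  have := elem (ι := Unit) (fun _ => L) ht0 ht1 hA0 hA1 hAt hA hp hc hpc
  simpa using this

lemma sum_psd' {ι : Type*} [Fintype ι] (J : ι → Matrix m n ℂ) {X : Matrix n n ℂ} (hX : X.PosSemidef) :
    (∑ i, J i * X * (J i)ᴴ).PosSemidef :=
  Matrix.posSemidef_sum _ fun i _ => hX.mul_mul_conjTranspose_same (J i)

lemma conj_sum {ι : Type*} [Fintype ι] (J : ι → Matrix m n ℂ) (X : Matrix n n ℂ) {W : Matrix m m ℂ}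
    (hW : Wᴴ = W) :
    W * (∑ i, J i * X * (J i)ᴴ) * W = ∑ i, ((J i)ᴴ * W)ᴴ * X * ((J i)ᴴ * W) := by
  rw [Finset.mul_sum, Finset.sum_mul]
  refine Finset.sum_congr rfl fun i _ => ?_
  rw [Matrix.conjTranspose_mul, Matrix.conjTranspose_conjTranspose, hW]
  simp only [Matrix.mul_assoc]

lemma pd_comb {A B : Matrix n n ℂ} (hA : A.PosDef) (hB : B.PosDef) {t : ℝ}
    (ht0 : 0 ≤ t) (ht1 : t ≤ 1) : (t • A + (1 - t) • B).PosDef := by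
  rcases ht0.eq_or_lt with rfl | ht0
  · simpa using hB
  · exact (hA.smul ht0).add_posSemidef (hB.posSemidef.smul (sub_nonneg.2 ht1))

lemma cfl {ι : Type*} [Fintype ι] (J : ι → Matrix m n ℂ)
    (hJ : ∀ Y : Matrix n n ℂ, Y.PosDef → (∑ i, J i * Y * (J i)ᴴ).PosDef)
    {B0 B1 : Matrix m m ℂ} {V0 V1 : Matrix n n ℂ} {t : ℝ} (ht0 : 0 ≤ t) (ht1 : t ≤ 1)
    (hB0 : B0.PosDef) (hB1 : B1.PosDef) (hV0 : V0.PosDef) (hV1 : V1.PosDef)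
    {q v u : ℝ} (hq : 0 < q) (hv : 0 ≤ v) (hu : 1 ≤ u) (hqv : q + v ≤ 1 / u) :
    t * tp (mp B0 (q/2) * (∑ i, J i * mp V0 v * (J i)ᴴ) * mp B0 (q/2)) u + 
    (1 - t) * tp (mp B1 (q/2) * (∑ i, J i * mp V1 v * (J i)ᴴ) * mp B1 (q/2)) u ≤
    tp (mp (t • B0 + (1 - t) • B1) (q/2) * (∑ i, J i * mp (t • V0 + (1 - t) • V1) v * (J i)ᴴ) *
      mp (t • B0 + (1 - t) • B1) (q/2)) u := by
  have hBt := pd_comb hB0 hB1 ht0 ht1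
  have hVt := pd_comb hV0 hV1 ht0 ht1
  generalize hBe : t • B0 + (1 - t) • B1 = Bt at hBt ⊢
  generalize hVe : t • V0 + (1 - t) • V1 = Vt at hVt ⊢
  have hB : (Bt - (t • B0 + (1 - t) • B1)).PosSemidef := by rw [hBe]; exact psd_self_sub _
  have hV : (Vt - (t • V0 + (1 - t) • V1)).PosSemidef := by rw [hVe]; exact psd_self_sub _
  have hu0 : 0 < u := by linarith
  rcases hv.eq_or_lt with rfl | hv
  · rw [mp_zero hV0.1, mp_zero hV1.1, mp_zero hVt.1]
    have hN := hJ 1 Matrix.PosDef.one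
    generalize (∑ i, J i * (1 : Matrix n n ℂ) * (J i)ᴴ) = N at *
    have e : ∀ B : Matrix m m ℂ, B.PosDef → tp (mp B (q/2) * N * mp B (q/2)) u = 
        tp ((mp N (1/2))ᴴ * mp B q * mp N (1/2)) u := by
      intro B hB
      have := zt1 (mp B (q/2)) hN.posSemidef u
      rw [mp_herm, mp_halves hB.posSemidef hq.le] at this
      rw [mp_herm]
      exact this
    rw [e _ hB0, e _ hB1, e _ hBt]
    refine elem1 _ ht0 ht1 hB0.posSemidef hB1.posSemidef hBt.posSemidef hB hq.le hu ?_
    rw [add_zero, le_div_iff₀ hu0] at hqv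
    exact hqv
  · have hd : 0 < 1 / u - v := by linarith
    have hu1 : 1 / u ≤ 1 := by rw [div_le_one hu0]; exact hu
    have inv : ∀ B : Matrix m m ℂ, B.PosDef → mp B (q/2) * mp B (-(q/2)) = 1 := by
      intro B hB
      rw [mp_mul_pd hB, add_neg_cancel, mp_zero hB.1]
    have ha : 1 ≤ 1 / (1 / u - v) := by rw [le_div_iff₀ hd]; linarith
    have hb : 1 ≤ 1 / v := by rw [le_div_iff₀ hv]; linarith
    have hab : 1 / (1 / (1 / u - v)) + 1 / (1 / v) = 1 / u := by
      simp only [one_div_one_div]; ring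
    obtain ⟨P, hP, eq⟩ := zhang'_eq (inv _ hBt) (hJ _ (mp_pd hVt v)) hu0 ha hb hab
    have i0 := zhang' (inv _ hB0) (hJ _ (mp_pd hV0 v)).posSemidef hP hu0 ha hb hab
    have i1 := zhang' (inv _ hB1) (hJ _ (mp_pd hV1 v)).posSemidef hP hu0 ha hb hab
    have k1 := elem1 (mp P (1/2)) ht0 ht1 hB0.posSemidef hB1.posSemidef hBt.posSemidef hB hq.le ha
      (by rw [mul_one_div, div_le_one hd]; linarith)
    have k2 := elem (fun i => (J i)ᴴ * mp P (-(1/2))) ht0 ht1 hV0.posSemidef hV1.posSemidef 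
      hVt.posSemidef hV hv.le hb (by rw [mul_one_div_cancel hv.ne'])
    simp only [← conj_sum J _ (mp_herm P (-(1/2)))] at k2
    rw [mp_herm] at k1
    rw [mp_herm, mp_halves hB0.posSemidef hq.le] at i0
    rw [mp_herm, mp_halves hB1.posSemidef hq.le] at i1
    rw [mp_herm, mp_halves hBt.posSemidef hq.le] at eq
    have u' : 0 < 1 / u := by positivity
    refine le_of_mul_le_mul_left ?_ u'
    rw [eq]
    have l1 := mul_le_mul_of_nonneg_left i0 ht0
    have l2 := mul_le_mul_of_nonneg_left i1 (sub_nonneg.2 ht1)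
    have l3 := mul_le_mul_of_nonneg_left k1 (by positivity : 0 ≤ 1 / (1 / (1 / u - v)))
    have l4 := mul_le_mul_of_nonneg_left k2 (by positivity : 0 ≤ 1 / (1 / v))
    linarith

end partfour

section partfive

variable {n m : Type*} [Fintype n] [DecidableEq n] [Fintype m] [DecidableEq m]

lemma tp_pos [Nonempty n] {T : Matrix n n ℂ} (hT : T.PosDef) (c : ℝ) : 0 < tp T c := by
  have := (mp_pd hT c).trace_pos
  exact (Complex.pos_iff.1 this).1

lemma dens_nonempty {C : Matrix n n ℂ} (hC : IsDensity C) : Nonempty n := by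
  by_contra h
  rw [not_nonempty_iff] at h
  have := hC.2
  simp [Matrix.trace] at this

lemma holder_dens {T C : Matrix n n ℂ} (hT : T.PosDef) (hC : IsDensity C) {r u : ℝ} (hu : 1 ≤ u)
    (hr : r = 1 - 1 / u) : (Matrix.trace (mp C r * T)).re ≤ (tp T u) ^ (1 / u) := by
  have := dens_nonempty hC
  have hx := tp_pos hT u
  set x := tp T u with hxd
  have hu0 : 0 < u := by linarith
  set k := x ^ (-(1 / u)) with hk
  have hk0 : 0 < k := Real.rpow_pos_of_pos hx _
  have h := young (hT.posSemidef.smul hk0.le) hC.1 hu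
  rw [hC.2, ← hr] at h
  have h1 : tp (k • T) u = 1 := by
    unfold tp
    rw [mp_smul hT.posSemidef hk0.le, Matrix.trace_smul, Complex.smul_re, smul_eq_mul]
    change k ^ u * x = 1
    rw [hk, ← Real.rpow_mul hx.le, neg_mul, one_div_mul_cancel hu0.ne', Real.rpow_neg_one, 
      inv_mul_cancel₀ hx.ne']
  rw [h1, Matrix.smul_mul, Matrix.trace_smul, Complex.smul_re, smul_eq_mul, Matrix.trace_mul_comm] at h
  have h2 : k * (Matrix.trace (mp C r * T)).re ≤ 1 := by
    simp only [Complex.one_re] at h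
    have : u * (k * (Matrix.trace (mp C r * T)).re) ≤ u * 1 := by linarith
    exact le_of_mul_le_mul_left this hu0
  have h3 : x ^ (1 / u) = 1 / k := by
    rw [hk, Real.rpow_neg hx.le]; simp
  rw [h3, le_div_iff₀ hk0]
  linarith

lemma holder_opt [Nonempty n] {T : Matrix n n ℂ} (hT : T.PosDef) {r u : ℝ} (hu : 1 ≤ u)
    (hr : r = 1 - 1 / u) : ∃ C, IsDensity C ∧ (Matrix.trace (mp C r * T)).re = (tp T u) ^ (1 / u) := by
  have hx := tp_pos hT u
  have hu0 : 0 < u := by linarith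
  set x := tp T u with hxd
  refine ⟨x⁻¹ • mp T u, ⟨(mp_psd hT.posSemidef u).smul (by positivity), ?_⟩, ?_⟩
  · rw [Matrix.trace_smul]
    have h1 : Matrix.trace (mp T u) = (x : ℂ) := by
      apply Complex.ext
      · simp [hxd, tp]
      · have := (mp_psd hT.posSemidef u).trace_nonneg
        rw [Complex.ofReal_im]
        exact (Complex.nonneg_iff.1 this).2.symm
    rw [h1, Complex.real_smul, ← Complex.ofReal_mul, inv_mul_cancel₀ hx.ne', Complex.ofReal_one]
  · rw [mp_smul (mp_psd hT.posSemidef u) (by positivity), mp_mp hT.posSemidef]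
    nth_rewrite 2 [← mp_one hT.1]
    rw [Matrix.smul_mul, mp_mul_pd hT, Matrix.trace_smul, Complex.smul_re, smul_eq_mul,
      show u * r + 1 = u by rw [hr]; field_simp; ring]
    change x⁻¹ ^ r * x = _
    rw [Real.inv_rpow hx.le, ← Real.rpow_neg hx.le]
    nth_rewrite 2 [← Real.rpow_one x]
    rw [← Real.rpow_add hx, hr]
    congr 1; ring

lemma tr_adj {ι : Type*} [Fintype ι] (J : ι → Matrix m n ℂ) (W C : Matrix m m ℂ) (V : Matrix n n ℂ) :
    Matrix.trace ((∑ i, (J i)ᴴ * (W * C * W) * J i) * V) = 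
      Matrix.trace (C * (W * (∑ i, J i * V * (J i)ᴴ) * W)) := by
  rw [Finset.sum_mul, Finset.mul_sum, Finset.sum_mul, Finset.mul_sum, Matrix.trace_sum, Matrix.trace_sum]
  refine Finset.sum_congr rfl fun i _ => ?_
  have : (J i)ᴴ * (W * C * W) * J i * V = ((J i)ᴴ * W) * (C * (W * J i * V)) := by
    simp only [Matrix.mul_assoc]
  rw [this, Matrix.trace_mul_comm]
  simp only [Matrix.mul_assoc]

lemma gstep {ι : Type*} [Fintype ι] (J : ι → Matrix m n ℂ)
    (hJ1 : ∀ Y : Matrix n n ℂ, Y.PosDef → (∑ i, J i * Y * (J i)ᴴ).PosDef)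
    (hJ2 : ∀ Y : Matrix m m ℂ, Y.PosDef → (∑ i, (J i)ᴴ * Y * J i).PosDef)
    {B0 B1 C0 C1 : Matrix m m ℂ} {t : ℝ} (ht0 : 0 ≤ t) (ht1 : t ≤ 1)
    (hB0 : B0.PosDef) (hB1 : B1.PosDef) (hC0 : C0.PosDef) (hC1 : C1.PosDef)
    (dC0 : IsDensity C0) (dC1 : IsDensity C1)
    {q r b : ℝ} (hq : 0 < q) (hr : 0 < r) (hr1 : r < 1) (hb : 1 ≤ b) 
    (hqb : q + (1 - 1 / b) ≤ 1 - r) :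
    ∃ C, IsDensity C ∧ 
    t * tp (∑ i, (J i)ᴴ * (mp B0 (q/2) * mp C0 r * mp B0 (q/2)) * J i) b + 
    (1 - t) * tp (∑ i, (J i)ᴴ * (mp B1 (q/2) * mp C1 r * mp B1 (q/2)) * J i) b ≤
    tp (∑ i, (J i)ᴴ * (mp (t • B0 + (1 - t) • B1) (q/2) * mp C r * 
      mp (t • B0 + (1 - t) • B1) (q/2)) * J i) b := by
  have := dens_nonempty dC0
  have hb0 : 0 < b := by linarith
  have hv : 0 ≤ 1 - 1 / b := by rw [sub_nonneg, div_le_one hb0]; exact hb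
  set u := 1 / (1 - r) with hu
  have hr' : 0 < 1 - r := by linarith
  have hu1 : 1 ≤ u := by rw [hu, le_div_iff₀ hr']; linarith
  have hur : 1 / u = 1 - r := by rw [hu, one_div_one_div]
  have hru : r = 1 - 1 / u := by rw [hur]; ring
  have hBt := pd_comb hB0 hB1 ht0 ht1
  have M0 := hJ2 _ (conj_pd' (mp_pd hC0 r) (mp_pd hB0 (q/2)))
  have M1 := hJ2 _ (conj_pd' (mp_pd hC1 r) (mp_pd hB1 (q/2)))
  have V0 := mp_pd M0 b
  have V1 := mp_pd M1 b
  have Vt := pd_comb V0 V1 ht0 ht1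
  have key := cfl J hJ1 ht0 ht1 hB0 hB1 V0 V1 hq hv hu1 (by rw [hur]; exact hqb)
  have T0 := conj_pd' (hJ1 _ (mp_pd V0 (1 - 1 / b))) (mp_pd hB0 (q/2))
  have T1 := conj_pd' (hJ1 _ (mp_pd V1 (1 - 1 / b))) (mp_pd hB1 (q/2))
  have Tt := conj_pd' (hJ1 _ (mp_pd Vt (1 - 1 / b))) (mp_pd hBt (q/2))
  obtain ⟨C, dC, hC⟩ := holder_opt Tt hu1 hru
  have H0 := holder_dens T0 dC0 hu1 hru
  have H1 := holder_dens T1 dC1 hu1 hru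
  refine ⟨C, dC, ?_⟩
  have e0 := young_eq M0.posSemidef hb
  have e1 := young_eq M1.posSemidef hb
  have Mt : (∑ i, (J i)ᴴ * (mp (t • B0 + (1 - t) • B1) (q/2) * mp C r * 
      mp (t • B0 + (1 - t) • B1) (q/2)) * J i).PosSemidef :=
    sum_psd J (conj_psd (mp_psd dC.1 r) (mp_herm _ _))
  have et := young Mt Vt.posSemidef hb
  rw [tr_adj] at e0 e1 et
  simp only [Matrix.trace_add, Matrix.trace_smul, Complex.add_re, Complex.smul_re, smul_eq_mul] at et
  rw [hC] at et
  have x0 := tp_nonneg T0.posSemidef u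
  have x1 := tp_nonneg T1.posSemidef u
  have hc := (Real.concaveOn_rpow (p := 1 / u) (by rw [hur]; linarith) (by rw [hur]; linarith)).2
    (Set.mem_Ici.2 x0) (Set.mem_Ici.2 x1) ht0 (sub_nonneg.2 ht1) (by ring)
  simp only [smul_eq_mul] at hc
  have hm := Real.rpow_le_rpow (by have := sub_nonneg.2 ht1; positivity) key (by rw [hur]; linarith : 0 ≤ 1 / u)
  have l := hc.trans hm
  have l0 := mul_le_mul_of_nonneg_left H0 ht0
  have l1 := mul_le_mul_of_nonneg_left H1 (sub_nonneg.2 ht1)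
  have l2 := mul_le_mul_of_nonneg_left (le_trans (add_le_add l0 l1) l) hb0.le
  generalize Matrix.trace (mp C0 r * _) = z0 at *
  generalize Matrix.trace (mp C1 r * _) = z1 at *
  have m0 : t * tp (∑ i, (J i)ᴴ * (mp B0 (q/2) * mp C0 r * mp B0 (q/2)) * J i) b = 
    t * (b * z0.re - (b - 1) * (mp (∑ i, (J i)ᴴ * (mp B0 (q/2) * mp C0 r * mp B0 (q/2)) * J i) b).trace.re) := by
      rw [e0]; ring
  have m1 : (1 - t) * tp (∑ i, (J i)ᴴ * (mp B1 (q/2) * mp C1 r * mp B1 (q/2)) * J i) b = 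
    (1 - t) * (b * z1.re - (b - 1) * (mp (∑ i, (J i)ᴴ * (mp B1 (q/2) * mp C1 r * mp B1 (q/2)) * J i) b).trace.re) := by
      rw [e1]; ring
  rw [m0, m1]
  linarith

end partfive

section partsix

lemma mmx {E F : Type*} [TopologicalSpace E] [AddCommGroup E] [Module ℝ E]
    [IsTopologicalAddGroup E] [ContinuousSMul ℝ E]
    [TopologicalSpace F] [AddCommGroup F] [Module ℝ F]
    [IsTopologicalAddGroup F] [ContinuousSMul ℝ F]
    {X : Set E} {Y : Set F} (neX : X.Nonempty) (kX : IsCompact X) (cX : Convex ℝ X)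
    (cY : Convex ℝ Y) (g : E → F → ℝ) (h1 : ∀ y ∈ Y, ContinuousOn (fun x => g x y) X)
    (h2 : ∀ x ∈ X, ContinuousOn (g x) Y) (h3 : ∀ y ∈ Y, ConcaveOn ℝ X (fun x => g x y))
    (h4 : ∀ x ∈ X, ConvexOn ℝ Y (g x)) (α : ℝ) (h : ∀ y ∈ Y, ∃ x ∈ X, α ≤ g x y) :
    ∃ x ∈ X, ∀ y ∈ Y, α ≤ g x y := by
  by_contra! hc
  have hfy : ∀ y ∈ Y, LowerSemicontinuousOn (fun x => - g x y) X :=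
    fun y hy => (h1 y hy).neg.lowerSemicontinuousOn
  have hfx : ∀ x ∈ X, UpperSemicontinuousOn (fun y => - g x y) Y :=
    fun x hx => (h2 x hx).neg.upperSemicontinuousOn
  have hfy' : ∀ y ∈ Y, QuasiconvexOn ℝ X (fun x => - g x y) :=
    fun y hy => (h3 y hy).neg.quasiconvexOn
  have hfx' : ∀ x ∈ X, QuasiconcaveOn ℝ Y (fun y => - g x y) :=
    fun x hx => (h4 x hx).neg.quasiconcaveOn
  have : ∃ s : Finset Y, ∀ x ∈ X, ∃ i ∈ s, -α < - g x i := by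
    rw [← LowerSemicontinuousOn.inter_biInter_preimage_Iic_eq_empty_iff_exists_finset kX hfy]
    apply Set.eq_empty_of_forall_notMem
    rintro x ⟨hx, hx'⟩
    obtain ⟨y, hy, hxy⟩ := hc x hx
    simp only [Set.mem_iInter, Set.mem_preimage, Set.mem_Iic] at hx'
    have := hx' y hy
    linarith
  obtain ⟨s, hs⟩ := this
  have hs' (x) (hx : x ∈ X) : ∃ y ∈ Subtype.val '' (s : Set Y), -α < - g x y := by
    obtain ⟨i, hi, hi'⟩ := hs x hx
    refine ⟨i.val, ?_, hi'⟩
    simp [hi]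
  obtain ⟨y0, hy0, hh⟩ := Sion.exists_lt_iInf_of_lt_iInf_of_finite
        neX kX hfy hfy' cY hfx hfx' cX (t := -α)
        (Set.toFinite _) (Subtype.coe_image_subset Y ↑s) hs'
  obtain ⟨x, hx, hxa⟩ := h y0 hy0
  have := hh x hx
  linarith

variable {n m : Type*} [Fintype n] [DecidableEq n] [Fintype m] [DecidableEq m]

open scoped Matrix.Norms.L2Operator in
lemma mp_cont {t : ℝ} (ht : 0 ≤ t) :
    ContinuousOn (fun A : Matrix n n ℂ => mp A t) {A | A.PosSemidef} := by
  intro A hA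
  obtain ⟨R, hR⟩ : ∃ R : ℝ, ‖A‖ < R := ⟨‖A‖ + 1, by linarith⟩
  have h := continuousOn_cfc (𝕜 := ℝ) (Matrix n n ℂ) (isCompact_Icc (a := (0:ℝ)) (b := R))
    (fun x => x ^ t) ((Real.continuous_rpow_const ht).continuousOn)
  have key : ∀ M : Matrix n n ℂ, M.PosSemidef → ‖M‖ ≤ R →
      M ∈ {a : Matrix n n ℂ | IsSelfAdjoint a ∧ spectrum ℝ a ⊆ Set.Icc 0 R} := by
    intro M hM hMR
    refine ⟨hM.1, fun x hx => ⟨psd_spec hM hx, ?_⟩⟩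
    have := spectrum.norm_le_norm_mul_of_mem hx
    have h1 : ‖(1 : Matrix n n ℂ)‖ ≤ 1 := by
      by_cases hn : Nonempty n
      · exact norm_one.le
      · rw [not_nonempty_iff] at hn
        rw [Subsingleton.elim (1 : Matrix n n ℂ) 0, norm_zero]; exact zero_le_one
    have h2 : ‖M‖ * ‖(1 : Matrix n n ℂ)‖ ≤ ‖M‖ * 1 := mul_le_mul_of_nonneg_left h1 (norm_nonneg _)
    have h3 := le_abs_self x
    rw [Real.norm_eq_abs] at this
    linarith
  have h0 := h A (key A hA hR.le)
  refine h0.mono_of_mem_nhdsWithin ?_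
  have : {M : Matrix n n ℂ | ‖M‖ < R} ∈ nhds A := (isOpen_lt continuous_norm continuous_const).mem_nhds hR
  filter_upwards [self_mem_nhdsWithin, mem_nhdsWithin_of_mem_nhds this] with M hM hMR
  exact key M hM (le_of_lt hMR)

lemma tp_cont {t : ℝ} (ht : 0 ≤ t) :
    ContinuousOn (fun A : Matrix n n ℂ => tp A t) {A | A.PosSemidef} := by
  unfold tp
  exact Complex.continuous_re.comp_continuousOn
    ((continuous_id.matrix_trace).comp_continuousOn (mp_cont ht))

lemma inv_eq {P : Matrix n n ℂ} (hP : P.PosDef) : mp P (-1) = P⁻¹ :=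
  (Matrix.inv_eq_left_inv (mp_neg_mul hP)).symm

lemma inv_cont : ContinuousOn (fun A : Matrix n n ℂ => mp A (-1)) {A | A.PosDef} := by
  have : ContinuousOn (fun A : Matrix n n ℂ => A⁻¹) {A | A.PosDef} := by
    intro A hA
    apply ContinuousAt.continuousWithinAt
    apply continuousAt_matrix_inv
    have := hA.isUnit.map Matrix.detMonoidHom
    have h2 : A.det ≠ 0 := hA.det_pos.ne'
    rw [Ring.inverse_eq_inv']
    exact continuousAt_inv₀ h2
  exact this.congr fun A hA => inv_eq hA

lemma inv_convex {P0 P1 : Matrix n n ℂ} (h0 : P0.PosDef) (h1 : P1.PosDef) {t : ℝ}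
    (ht0 : 0 ≤ t) (ht1 : t ≤ 1) :
    ((t • mp P0 (-1) + (1 - t) • mp P1 (-1)) - mp (t • P0 + (1 - t) • P1) (-1)).PosSemidef := by
  have hb : ∀ P : Matrix n n ℂ, P.PosDef → (Matrix.fromBlocks P 1 1 P⁻¹).PosSemidef := by
    intro P hP
    have := hP.isUnit.invertible
    have := Matrix.PosDef.fromBlocks₁₁ (A := P) (1 : Matrix n n ℂ) P⁻¹ hP
    rw [Matrix.conjTranspose_one] at this
    rw [this]
    simpa using psd_self_sub (P⁻¹)
  have hP := pd_comb h0 h1 ht0 ht1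
  rw [inv_eq h0, inv_eq h1, inv_eq hP]
  have hh := ((hb P0 h0).smul ht0).add ((hb P1 h1).smul (sub_nonneg.2 ht1))
  rw [Matrix.fromBlocks_smul, Matrix.fromBlocks_smul, Matrix.fromBlocks_add] at hh
  have := hP.isUnit.invertible
  have h2 := Matrix.PosDef.fromBlocks₁₁ (A := t • P0 + (1 - t) • P1) (1 : Matrix n n ℂ)
    (t • P0⁻¹ + (1 - t) • P1⁻¹) hP
  rw [Matrix.conjTranspose_one] at h2
  rw [show t • (1 : Matrix n n ℂ) + (1 - t) • (1 : Matrix n n ℂ) = 1 by rw [← add_smul]; simp, h2] at hh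
  simpa using hh

end partsix

section partseven

variable {n m : Type*} [Fintype n] [DecidableEq n] [Fintype m] [DecidableEq m]
  {ι : Type*} [Fintype ι]

/-- middle operator -/
noncomputable def NN (J : ι → Matrix m n ℂ) (q r : ℝ) (B C : Matrix m m ℂ) : Matrix n n ℂ :=
  ∑ i, (J i)ᴴ * (mp B (q / 2) * mp C r * mp B (q / 2)) * J i

/-- first part of the variational functional -/
noncomputable def G1 (K : Matrix n n ℂ) (p a : ℝ) (A P : Matrix n n ℂ) : ℝ :=
  tp (mp P (1 / 2) * (Kᴴ * mp A p * K) * mp P (1 / 2)) a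

/-- second part of the variational functional -/
noncomputable def G2 (J : ι → Matrix m n ℂ) (q r b : ℝ) (B C : Matrix m m ℂ) (P : Matrix n n ℂ) : ℝ :=
  tp (mp P (-(1 / 2)) * NN J q r B C * mp P (-(1 / 2))) b

/-- the objective -/
noncomputable def FF (K : Matrix n n ℂ) (J : ι → Matrix m n ℂ) (p q r s : ℝ)
    (A : Matrix n n ℂ) (B C : Matrix m m ℂ) : ℝ :=
  tp ((mp A (p / 2) * K) * NN J q r B C * (mp A (p / 2) * K)ᴴ) s

/-- the variational functional -/
noncomputable def GG (K : Matrix n n ℂ) (J : ι → Matrix m n ℂ) (p q r a b : ℝ)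
    (A : Matrix n n ℂ) (B C : Matrix m m ℂ) (P : Matrix n n ℂ) : ℝ :=
  1 / a * G1 K p a A P + 1 / b * G2 J q r b B C P

variable {K K' : Matrix n n ℂ} {J : ι → Matrix m n ℂ} {p q r s a b t : ℝ}
  {A A0 A1 P P0 P1 : Matrix n n ℂ} {B B0 B1 C C0 C1 : Matrix m m ℂ}

lemma mid_psd (hC : C.PosSemidef) : (mp B (q / 2) * mp C r * mp B (q / 2)).PosSemidef :=
  conj_psd (mp_psd hC r) (mp_herm B _)

lemma NN_psd (hC : C.PosSemidef) : (NN J q r B C).PosSemidef :=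
  sum_psd J (mid_psd hC)

lemma XX (hA : A.PosSemidef) (hp : 0 ≤ p) :
    (mp A (p / 2) * K)ᴴ * (mp A (p / 2) * K) = Kᴴ * mp A p * K := by
  rw [Matrix.conjTranspose_mul, mp_herm]
  have h : mp A (p / 2) * mp A (p / 2) = mp A p := by
    rw [mp_mul hA (by linarith) (by linarith)]; congr 1; ring
  simp only [← h, Matrix.mul_assoc]

lemma Xinv (hK : K * K' = 1) (hA : A.PosDef) : (mp A (p / 2) * K) * (K' * mp A (-(p / 2))) = 1 := by
  rw [show (mp A (p / 2) * K) * (K' * mp A (-(p / 2))) = mp A (p / 2) * (K * K') * mp A (-(p / 2)) by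
    simp only [Matrix.mul_assoc], hK, Matrix.mul_one, mp_mul_pd hA]
  simp [mp_zero hA.1]

lemma FF_le (hK : K * K' = 1) (hA : A.PosDef) (hC : C.PosSemidef) (hP : P.PosDef) (hp : 0 < p)
    (hs : 0 < s) (ha : 1 ≤ a) (hb : 1 ≤ b) (hab : 1 / a + 1 / b = 1 / s) :
    1 / s * FF K J p q r s A B C ≤ GG K J p q r a b A B C P := by
  have := zhang' (Xinv (p := p) hK hA) (NN_psd (J := J) (q := q) (r := r) (B := B) hC) hP hs ha hb hab
  rw [XX hA.posSemidef hp.le] at this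
  exact this

lemma FF_eq (hK : K * K' = 1) (hJ2 : ∀ Y : Matrix m m ℂ, Y.PosDef → (∑ i, (J i)ᴴ * Y * J i).PosDef)
    (hA : A.PosDef) (hB : B.PosDef) (hC : C.PosDef) (hp : 0 < p)
    (hs : 0 < s) (ha : 1 ≤ a) (hb : 1 ≤ b) (hab : 1 / a + 1 / b = 1 / s) :
    ∃ P : Matrix n n ℂ, P.PosDef ∧ 1 / s * FF K J p q r s A B C = GG K J p q r a b A B C P := by
  have := zhang'_eq (M := NN J q r B C) (Xinv (p := p) hK hA)
    (hJ2 _ (conj_pd' (mp_pd hC r) (mp_pd hB _))) hs ha hb hab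
  rw [XX hA.posSemidef hp.le] at this
  exact this

lemma G1_nonneg (hA : A.PosSemidef) : 0 ≤ G1 K p a A P :=
  tp_nonneg (conj_psd ((mp_psd hA p).conjTranspose_mul_mul_same K) (mp_herm P _)) _

lemma G2_nonneg (hC : C.PosSemidef) : 0 ≤ G2 J q r b B C P :=
  tp_nonneg (conj_psd (NN_psd hC) (mp_herm P _)) _

lemma GG_nonneg (hA : A.PosSemidef) (hC : C.PosSemidef) (ha : 1 ≤ a) (hb : 1 ≤ b) :
    0 ≤ GG K J p q r a b A B C P := by
  have h1 : 0 ≤ 1 / a := by positivity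
  have h2 : 0 ≤ 1 / b := by positivity
  exact add_nonneg (mul_nonneg h1 (G1_nonneg hA)) (mul_nonneg h2 (G2_nonneg hC))

lemma G1_alt (P : Matrix n n ℂ) :
    G1 K p a A P = tp ((K * mp P (1 / 2))ᴴ * mp A p * (K * mp P (1 / 2))) a := by
  unfold G1
  rw [Matrix.conjTranspose_mul, mp_herm]
  simp only [Matrix.mul_assoc]

lemma G1_concave (hA0 : A0.PosDef) (hA1 : A1.PosDef) (ht0 : 0 ≤ t) (ht1 : t ≤ 1)
    (hp : 0 < p) (ha : 1 ≤ a) (hpa : p * a ≤ 1) :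
    t * G1 K p a A0 P + (1 - t) * G1 K p a A1 P ≤ G1 K p a (t • A0 + (1 - t) • A1) P := by
  simp only [G1_alt]
  exact elem1 _ ht0 ht1 hA0.posSemidef hA1.posSemidef (pd_comb hA0 hA1 ht0 ht1).posSemidef
    (psd_self_sub _) hp.le ha hpa

lemma G2_alt : G2 J q r b B C P = tp (∑ i, (J i * mp P (-(1 / 2)))ᴴ *
    (mp B (q / 2) * mp C r * mp B (q / 2)) * (J i * mp P (-(1 / 2)))) b := by
  unfold G2 NN
  rw [Matrix.mul_sum, Matrix.sum_mul]
  congr 1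
  apply Finset.sum_congr rfl
  intro i _
  rw [Matrix.conjTranspose_mul, mp_herm]
  simp only [Matrix.mul_assoc]

lemma G2_alt' : G2 J q r b B C P = tp (∑ i, (mp B (q / 2) * (J i * mp P (-(1 / 2))))ᴴ *
    mp C r * (mp B (q / 2) * (J i * mp P (-(1 / 2))))) b := by
  rw [G2_alt]
  congr 1
  apply Finset.sum_congr rfl
  intro i _
  rw [Matrix.conjTranspose_mul (mp B _), mp_herm]
  simp only [Matrix.mul_assoc]

lemma G2_concave (hC0 : C0.PosSemidef) (hC1 : C1.PosSemidef) (ht0 : 0 ≤ t) (ht1 : t ≤ 1)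
    (hr : 0 < r) (hb : 1 ≤ b) (hrb : r * b ≤ 1) :
    t * G2 J q r b B C0 P + (1 - t) * G2 J q r b B C1 P ≤ G2 J q r b B (t • C0 + (1 - t) • C1) P := by
  simp only [G2_alt']
  exact elem _ ht0 ht1 hC0 hC1 (psd_comb hC0 hC1 ht0 ht1)
    (psd_self_sub _) hr.le hb hrb

lemma GG_concave (hC0 : C0.PosSemidef) (hC1 : C1.PosSemidef) (ht0 : 0 ≤ t) (ht1 : t ≤ 1)
    (hr : 0 < r) (hb : 1 ≤ b) (hrb : r * b ≤ 1) :
    t * GG K J p q r a b A B C0 P + (1 - t) * GG K J p q r a b A B C1 P ≤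
      GG K J p q r a b A B (t • C0 + (1 - t) • C1) P := by
  have h := G2_concave (J := J) (q := q) (B := B) (P := P) hC0 hC1 ht0 ht1 hr hb hrb
  have h2 : 0 ≤ 1 / b := by positivity
  have := mul_le_mul_of_nonneg_left h h2
  unfold GG
  linarith

lemma G1_alt2 (hA : A.PosSemidef) (hp : 0 ≤ p) (hP : P.PosSemidef) :
    G1 K p a A P = tp ((mp A (p / 2) * K) * P * (mp A (p / 2) * K)ᴴ) a := by
  rw [zt1 _ hP, XX hA hp]
  rfl

lemma G2_alt2 (hC : C.PosSemidef) (hP : P.PosDef) :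
    G2 J q r b B C P = tp (mp (NN J q r B C) (1 / 2) * mp P (-1) * mp (NN J q r B C) (1 / 2)) b := by
  rw [zt0 (NN_psd hC) hP]
  rfl

lemma GG_convex (hA : A.PosSemidef) (hC : C.PosSemidef) (hp : 0 ≤ p) (hP0 : P0.PosDef)
    (hP1 : P1.PosDef) (ht0 : 0 ≤ t) (ht1 : t ≤ 1) (ha : 1 ≤ a) (hb : 1 ≤ b) :
    GG K J p q r a b A B C (t • P0 + (1 - t) • P1) ≤
    t * GG K J p q r a b A B C P0 + (1 - t) * GG K J p q r a b A B C P1 := by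
  have hPt := pd_comb hP0 hP1 ht0 ht1
  have e1 : G1 K p a A (t • P0 + (1 - t) • P1) ≤ t * G1 K p a A P0 + (1 - t) * G1 K p a A P1 := by
    rw [G1_alt2 hA hp hP0.posSemidef, G1_alt2 hA hp hP1.posSemidef, G1_alt2 hA hp hPt.posSemidef]
    refine tp_convex ht0 ht1 (hP0.posSemidef.mul_mul_conjTranspose_same _)
      (hP1.posSemidef.mul_mul_conjTranspose_same _) (hPt.posSemidef.mul_mul_conjTranspose_same _) ?_ ha
    rw [Matrix.mul_add, Matrix.add_mul, Matrix.mul_smul, Matrix.mul_smul, Matrix.smul_mul,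
      Matrix.smul_mul]
    exact psd_self_sub _
  have e2 : G2 J q r b B C (t • P0 + (1 - t) • P1) ≤
      t * G2 J q r b B C P0 + (1 - t) * G2 J q r b B C P1 := by
    rw [G2_alt2 hC hP0, G2_alt2 hC hP1, G2_alt2 hC hPt]
    set W := mp (NN J q r B C) (1 / 2) with hW
    have hWh : Wᴴ = W := mp_herm _ _
    refine tp_convex ht0 ht1 (conj_psd (mp_psd hP0.posSemidef _) hWh)
      (conj_psd (mp_psd hP1.posSemidef _) hWh) (conj_psd (mp_psd hPt.posSemidef _) hWh) ?_ hb
    have := conj_psd (inv_convex hP0 hP1 ht0 ht1) hWh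
    rw [Matrix.mul_sub, Matrix.sub_mul, Matrix.mul_add, Matrix.add_mul, Matrix.mul_smul,
      Matrix.mul_smul, Matrix.smul_mul, Matrix.smul_mul] at this
    exact this
  have h1 : 0 ≤ 1 / a := by positivity
  have h2 : 0 ≤ 1 / b := by positivity
  have f1 := mul_le_mul_of_nonneg_left e1 h1
  have f2 := mul_le_mul_of_nonneg_left e2 h2
  unfold GG
  linarith

lemma tp_comp {S : Set (Matrix m m ℂ)} {f : Matrix m m ℂ → Matrix n n ℂ} {c : ℝ} (hc : 0 ≤ c)
    (hf : ContinuousOn f S) (h : ∀ x ∈ S, (f x).PosSemidef) : ContinuousOn (fun x => tp (f x) c) S :=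
  ContinuousOn.comp (g := fun A : Matrix n n ℂ => tp A c) (tp_cont hc) hf h

lemma GG_contC (hr : 0 < r) (hb : 1 ≤ b) :
    ContinuousOn (fun C : Matrix m m ℂ => GG K J p q r a b A B C P) {C | C.PosSemidef} := by
  have : ContinuousOn (fun C : Matrix m m ℂ => G2 J q r b B C P) {C | C.PosSemidef} := by
    unfold G2
    refine tp_comp (by linarith) ?_
      (fun C hC => conj_psd (NN_psd hC) (mp_herm P _))
    have h0 : Continuous (fun M : Matrix m m ℂ => mp P (-(1 / 2)) *
      (∑ i, (J i)ᴴ * (mp B (q / 2) * M * mp B (q / 2)) * J i) * mp P (-(1 / 2))) := by fun_prop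
    exact h0.comp_continuousOn (mp_cont hr.le)
  unfold GG
  exact continuousOn_const.add (continuousOn_const.mul this)

lemma GG_contP (hA : A.PosSemidef) (hC : C.PosSemidef) (hp : 0 ≤ p) (ha : 1 ≤ a) (hb : 1 ≤ b) :
    ContinuousOn (GG K J p q r a b A B C) {P | P.PosDef} := by
  have e1 : ContinuousOn (G1 K p a A) {P | P.PosDef} := by
    have : ContinuousOn (fun P => tp ((mp A (p / 2) * K) * P * (mp A (p / 2) * K)ᴴ) a) {P | P.PosDef} := by
      refine tp_comp (by linarith) ?_
        (fun P hP => Matrix.PosDef.posSemidef hP |>.mul_mul_conjTranspose_same _)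
      fun_prop
    exact this.congr fun P hP => G1_alt2 hA hp (Matrix.PosDef.posSemidef hP)
  have e2 : ContinuousOn (G2 J q r b B C) {P | P.PosDef} := by
    have : ContinuousOn (fun P => tp (mp (NN J q r B C) (1 / 2) * mp P (-1) *
        mp (NN J q r B C) (1 / 2)) b) {P | P.PosDef} := by
      refine tp_comp (by linarith) ?_
        (fun P hP => conj_psd (mp_psd (Matrix.PosDef.posSemidef hP) _) (mp_herm _ _))
      have h0 : Continuous (fun M : Matrix n n ℂ => mp (NN J q r B C) (1 / 2) * M *
        mp (NN J q r B C) (1 / 2)) := by fun_prop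
      exact h0.comp_continuousOn inv_cont
    exact this.congr fun P hP => G2_alt2 hC hP
  unfold GG
  exact (continuousOn_const.mul e1).add (continuousOn_const.mul e2)

lemma GG_step (hJ1 : ∀ Y : Matrix n n ℂ, Y.PosDef → (∑ i, J i * Y * (J i)ᴴ).PosDef)
    (hJ2 : ∀ Y : Matrix m m ℂ, Y.PosDef → (∑ i, (J i)ᴴ * Y * J i).PosDef)
    (ht0 : 0 ≤ t) (ht1 : t ≤ 1) (hA0 : A0.PosDef) (hA1 : A1.PosDef)
    (hB0 : B0.PosDef) (hB1 : B1.PosDef) (hC0 : C0.PosDef) (hC1 : C1.PosDef)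
    (dC0 : IsDensity C0) (dC1 : IsDensity C1) (hP : P.PosDef) (hp : 0 < p) (hq : 0 < q) (hr : 0 < r)
    (hr1 : r < 1) (ha : 1 ≤ a) (hpa : p * a ≤ 1) (hb : 1 ≤ b) (hqb : q + (1 - 1 / b) ≤ 1 - r) :
    ∃ C, IsDensity C ∧ t * GG K J p q r a b A0 B0 C0 P + (1 - t) * GG K J p q r a b A1 B1 C1 P ≤
      GG K J p q r a b (t • A0 + (1 - t) • A1) (t • B0 + (1 - t) • B1) C P := by
  have hW := mp_pd hP (-(1 / 2))
  set W := mp P (-(1 / 2)) with hWd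
  have hWh : Wᴴ = W := mp_herm _ _
  obtain ⟨C, dC, hC⟩ := gstep (fun i => J i * W) (by
      intro Y hY
      have := hJ1 _ (conj_pd' hY hW)
      refine cast (congrArg Matrix.PosDef (Finset.sum_congr rfl fun i _ => ?_)) this
      rw [Matrix.conjTranspose_mul, hWh]
      simp only [Matrix.mul_assoc]) (by
      intro Y hY
      have := conj_pd' (hJ2 _ hY) hW
      rw [Matrix.mul_sum, Matrix.sum_mul] at this
      refine cast (congrArg Matrix.PosDef (Finset.sum_congr rfl fun i _ => ?_)) this
      rw [Matrix.conjTranspose_mul, hWh]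
      simp only [Matrix.mul_assoc]) ht0 ht1 hB0 hB1 hC0 hC1 dC0 dC1 hq hr hr1 hb hqb
  refine ⟨C, dC, ?_⟩
  have e1 := G1_concave (K := K) (P := P) hA0 hA1 ht0 ht1 hp ha hpa
  have e2 : t * G2 J q r b B0 C0 P + (1 - t) * G2 J q r b B1 C1 P ≤
      G2 J q r b (t • B0 + (1 - t) • B1) C P := by
    simp only [G2_alt]
    exact hC
  have h1 : 0 ≤ 1 / a := by positivity
  have h2 : 0 ≤ 1 / b := by positivity
  have f1 := mul_le_mul_of_nonneg_left e1 h1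
  have f2 := mul_le_mul_of_nonneg_left e2 h2
  unfold GG
  linarith

end partseven

section parteight

open scoped Pointwise

variable {n m : Type*} [Fintype n] [DecidableEq n] [Fintype m] [DecidableEq m]
  {ι : Type*} [Fintype ι]

lemma dens_compact : IsCompact {C : Matrix m m ℂ | IsDensity C} := by
  set T : Set (Matrix m m ℂ) := {S | (∀ i j, ‖S i j‖ ≤ 1)} ∩ {S | Matrix.trace (Sᴴ * S) = 1} with hT
  have hc : IsCompact {S : Matrix m m ℂ | (∀ i j, ‖S i j‖ ≤ 1)} := by
    have : IsCompact (Set.univ.pi fun _ : m => Set.univ.pi fun _ : m => Metric.closedBall (0 : ℂ) 1) :=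
      isCompact_univ_pi fun _ => isCompact_univ_pi fun _ => isCompact_closedBall _ _
    have he : {S : Matrix m m ℂ | (∀ i j, ‖S i j‖ ≤ 1)} =
        (Set.univ.pi fun _ : m => Set.univ.pi fun _ : m => Metric.closedBall (0 : ℂ) 1) := by
      apply Set.ext
      intro S
      exact ⟨fun h i _ j _ => mem_closedBall_zero_iff.2 (h i j),
        fun h i j => mem_closedBall_zero_iff.1 (h i trivial j trivial)⟩
    rw [he]
    exact this
  have hcl : IsClosed {S : Matrix m m ℂ | Matrix.trace (Sᴴ * S) = 1} := by
    apply isClosed_eq _ continuous_const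
    exact (continuous_id.matrix_conjTranspose.matrix_mul continuous_id).matrix_trace
  have hTc : IsCompact T := hc.inter_right hcl
  have hcont : Continuous (fun S : Matrix m m ℂ => Sᴴ * S) :=
    continuous_id.matrix_conjTranspose.matrix_mul continuous_id
  convert hTc.image hcont using 1
  ext C
  constructor
  · intro hC
    have hS : (mp C (1 / 2))ᴴ * mp C (1 / 2) = C := by
      rw [mp_herm, mp_mul hC.1 (by norm_num) (by norm_num)]
      norm_num
      exact mp_one hC.1.1
    refine ⟨mp C (1 / 2), ⟨?_, ?_⟩, hS⟩
    · intro i j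
      have h1 := hC.2
      rw [← hS] at h1
      have h2 : (∑ j, ∑ i, ‖mp C (1 / 2) i j‖ ^ 2 : ℝ) = 1 := by
        have : (Matrix.trace ((mp C (1 / 2))ᴴ * mp C (1 / 2))) =
          ((∑ j, ∑ i, ‖mp C (1 / 2) i j‖ ^ 2 : ℝ) : ℂ) := by
          simp only [Matrix.trace, Matrix.diag, Matrix.mul_apply, Matrix.conjTranspose_apply]
          push_cast
          refine Finset.sum_congr rfl fun j _ => Finset.sum_congr rfl fun i _ => ?_
          rw [← Complex.conj_mul']
          rfl
        rw [h1] at this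
        exact_mod_cast this.symm
      have h3 : ‖mp C (1 / 2) i j‖ ^ 2 ≤ 1 := by
        refine le_trans ?_ h2.le
        refine le_trans ?_ (Finset.single_le_sum (f := fun j => ∑ i, ‖mp C (1 / 2) i j‖ ^ 2)
          (fun j _ => by positivity) (Finset.mem_univ j))
        exact (Finset.single_le_sum (f := fun i => ‖mp C (1 / 2) i j‖ ^ 2)
          (fun j _ => by positivity) (Finset.mem_univ i))
      exact (sq_le_one_iff₀ (norm_nonneg _)).1 h3
    · change Matrix.trace _ = 1
      rw [hS]; exact hC.2
  · rintro ⟨S, ⟨_, hS⟩, rfl⟩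
    exact ⟨Matrix.posSemidef_conjTranspose_mul_self S, hS⟩

lemma dens_comb {C0 C1 : Matrix m m ℂ} (h0 : IsDensity C0) (h1 : IsDensity C1) {t : ℝ}
    (ht0 : 0 ≤ t) (ht1 : t ≤ 1) : IsDensity (t • C0 + (1 - t) • C1) := by
  refine ⟨psd_comb h0.1 h1.1 ht0 ht1, ?_⟩
  rw [Matrix.trace_add, Matrix.trace_smul, Matrix.trace_smul, h0.2, h1.2, ← add_smul]
  simp

lemma dens_convex : Convex ℝ {C : Matrix m m ℂ | IsDensity C} := by
  intro x hx y hy u v hu hv huv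
  obtain rfl : v = 1 - u := by linarith
  exact dens_comb hx hy hu (by linarith)

lemma pd_convex : Convex ℝ {C : Matrix n n ℂ | C.PosDef} := by
  intro x hx y hy u v hu hv huv
  obtain rfl : v = 1 - u := by linarith
  exact pd_comb hx hy hu (by linarith)

lemma dens_pd [Nonempty m] : ∃ D : Matrix m m ℂ, IsDensity D ∧ D.PosDef := by
  have h : (0:ℝ) < (Fintype.card m : ℝ)⁻¹ := by
    have : 0 < Fintype.card m := Fintype.card_pos
    positivity
  have hD : ((Fintype.card m : ℝ)⁻¹ • (1 : Matrix m m ℂ)).PosDef := Matrix.PosDef.one.smul h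
  refine ⟨_, ⟨hD.posSemidef, ?_⟩, hD⟩
  rw [Matrix.trace_smul, Matrix.trace_one, Complex.real_smul]
  have : (Fintype.card m : ℂ) ≠ 0 := by simp
  push_cast
  field_simp

lemma dens_pert {C : Matrix m m ℂ} (hC : IsDensity C) {e : ℝ} (he0 : 0 < e) (he1 : e < 1) :
    ∃ D : Matrix m m ℂ, D.PosSemidef ∧ IsDensity ((1 - e) • C + e • D) ∧ ((1 - e) • C + e • D).PosDef := by
  have := dens_nonempty hC
  obtain ⟨D, hD, hD'⟩ := dens_pd (m := m)
  refine ⟨D, hD.1, ?_, ?_⟩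
  · have := dens_comb hC hD (t := 1 - e) (by linarith) (by linarith)
    rwa [sub_sub_cancel] at this
  · rw [add_comm]
    exact (hD'.smul he0).add_posSemidef (hC.1.smul (by linarith))

variable {K K' : Matrix n n ℂ} {J : ι → Matrix m n ℂ} {p q r s a b t : ℝ}
  {A A0 A1 P P0 P1 : Matrix n n ℂ} {B B0 B1 C C0 C1 : Matrix m m ℂ}

lemma GG_pert {e : ℝ} (hA : A.PosSemidef) (he0 : 0 < e) (he1 : e < 1) {D : Matrix m m ℂ} (hC : IsDensity C)
    (hD : D.PosSemidef) (hr : 0 < r) (ha : 1 ≤ a) (hb : 1 ≤ b) (hrb : r * b ≤ 1) (P : Matrix n n ℂ) :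
    (1 - e) * GG K J p q r a b A B C P ≤ GG K J p q r a b A B ((1 - e) • C + e • D) P := by
  have := GG_concave (K := K) (J := J) (p := p) (q := q) (a := a) (A := A) (B := B) (P := P)
    hC.1 hD (t := 1 - e) (by linarith) (by linarith) hr hb hrb
  rw [sub_sub_cancel] at this
  have h2 := mul_nonneg he0.le (GG_nonneg (K := K) (J := J) (p := p) (q := q) (r := r) (a := a) (b := b)
    (B := B) (P := P) hA hD ha hb)
  linarith

lemma FF_main (hK : K * K' = 1) (hJ1 : ∀ Y : Matrix n n ℂ, Y.PosDef → (∑ i, J i * Y * (J i)ᴴ).PosDef)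
    (hJ2 : ∀ Y : Matrix m m ℂ, Y.PosDef → (∑ i, (J i)ᴴ * Y * J i).PosDef)
    (ht0 : 0 ≤ t) (ht1 : t ≤ 1) (hA0 : A0.PosDef) (hA1 : A1.PosDef)
    (hB0 : B0.PosDef) (hB1 : B1.PosDef) (dC0 : IsDensity C0) (dC1 : IsDensity C1)
    (hp : 0 < p) (hq : 0 < q) (hr : 0 < r) (hs : 0 < s)
    (hr1 : r < 1) (ha : 1 ≤ a) (hpa : p * a ≤ 1) (hb : 1 ≤ b) (hqb : q + (1 - 1 / b) ≤ 1 - r)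
    (hrb : r * b ≤ 1) (hab : 1 / a + 1 / b = 1 / s) {e : ℝ} (he0 : 0 < e) (he1 : e < 1) :
    ∃ C, IsDensity C ∧ (1 - e) ^ 2 * (t * FF K J p q r s A0 B0 C0 + (1 - t) * FF K J p q r s A1 B1 C1) ≤
      FF K J p q r s (t • A0 + (1 - t) • A1) (t • B0 + (1 - t) • B1) C := by
  obtain ⟨D0, hD0, dD0, pD0⟩ := dens_pert dC0 he0 he1
  obtain ⟨D1, hD1, dD1, pD1⟩ := dens_pert dC1 he0 he1
  have hAt := pd_comb hA0 hA1 ht0 ht1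
  have hBt := pd_comb hB0 hB1 ht0 ht1
  have hu : 0 ≤ 1 - t := by linarith
  have hv : 0 ≤ 1 - e := by linarith
  set α := (1 - e) * (1 / s * (t * FF K J p q r s A0 B0 C0 + (1 - t) * FF K J p q r s A1 B1 C1)) with hα
  have key : ∀ P ∈ {P : Matrix n n ℂ | P.PosDef}, ∃ C ∈ {C : Matrix m m ℂ | IsDensity C},
      α ≤ GG K J p q r a b (t • A0 + (1 - t) • A1) (t • B0 + (1 - t) • B1) C P := by
    intro P hP
    obtain ⟨C, dC, hC⟩ := GG_step (K := K) hJ1 hJ2 ht0 ht1 hA0 hA1 hB0 hB1 pD0 pD1 dD0 dD1 hP hp hq hr hr1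
      ha hpa hb hqb
    refine ⟨C, dC, le_trans ?_ hC⟩
    have g0 := GG_pert (K := K) (J := J) (p := p) (q := q) (B := B0) hA0.posSemidef he0 he1 dC0 hD0 hr ha hb hrb P
    have g1 := GG_pert (K := K) (J := J) (p := p) (q := q) (B := B1) hA1.posSemidef he0 he1 dC1 hD1 hr ha hb hrb P
    have f0 := mul_le_mul_of_nonneg_left
      (FF_le (J := J) (q := q) (r := r) (B := B0) hK hA0 dC0.1 hP hp hs ha hb hab) hv
    have f1 := mul_le_mul_of_nonneg_left
      (FF_le (J := J) (q := q) (r := r) (B := B1) hK hA1 dC1.1 hP hp hs ha hb hab) hv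
    have k0 := mul_le_mul_of_nonneg_left (f0.trans g0) ht0
    have k1 := mul_le_mul_of_nonneg_left (f1.trans g1) hu
    rw [hα]
    refine le_trans (le_of_eq ?_) (add_le_add k0 k1)
    ring
  obtain ⟨C, dC, hC⟩ := mmx ⟨C0, dC0⟩ dens_compact dens_convex pd_convex
    (fun C P => GG K J p q r a b (t • A0 + (1 - t) • A1) (t • B0 + (1 - t) • B1) C P)
    (fun P hP => (GG_contC hr hb).mono fun C hC => hC.1)
    (fun C hC => GG_contP hAt.posSemidef hC.1 hp.le ha hb)
    (fun P hP => ⟨dens_convex, by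
      intro x hx y hy u v hu hv huv
      obtain rfl : v = 1 - u := by linarith
      exact GG_concave hx.1 hy.1 hu (by linarith) hr hb hrb⟩)
    (fun C hC => ⟨pd_convex, by
      intro x hx y hy u v hu hv huv
      obtain rfl : v = 1 - u := by linarith
      exact GG_convex hAt.posSemidef hC.1 hp.le hx hy hu (by linarith) ha hb⟩) α key
  obtain ⟨D, hD, dD, pD⟩ := dens_pert dC he0 he1
  refine ⟨_, dD, ?_⟩
  obtain ⟨P, hP, hPe⟩ := FF_eq (q := q) (r := r) hK hJ2 hAt hBt pD hp hs ha hb hab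
  have g := GG_pert (K := K) (J := J) (p := p) (q := q) (B := t • B0 + (1 - t) • B1) hAt.posSemidef
    he0 he1 dC hD hr ha hb hrb P
  have g2 := mul_le_mul_of_nonneg_left (hC P hP) hv
  have g3 := (g2.trans g).trans_eq hPe.symm
  have g4 := mul_le_mul_of_nonneg_left g3 hs.le
  rw [hα] at g4
  refine le_trans (le_of_eq ?_) (g4.trans_eq ?_)
  · field_simp
  · field_simp

lemma FF_bdd (hK : K * K' = 1) (hA : A.PosDef)
    (hp : 0 < p) (hr : 0 < r) (hs : 0 < s) (ha : 1 ≤ a) (hb : 1 ≤ b) (hab : 1 / a + 1 / b = 1 / s) :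
    BddAbove {x | ∃ C : Matrix m m ℂ, IsDensity C ∧ x = FF K J p q r s A B C} := by
  have hc := (GG_contC (K := K) (J := J) (p := p) (q := q) (a := a) (A := A) (B := B)
    (P := (1 : Matrix n n ℂ)) hr hb).mono
    (fun C hC => hC.1 : {C : Matrix m m ℂ | IsDensity C} ⊆ {C | C.PosSemidef})
  obtain ⟨R, hR⟩ := dens_compact.bddAbove_image hc
  refine ⟨s * R, ?_⟩
  rintro x ⟨C, dC, rfl⟩
  have h1 := hR ⟨C, dC, rfl⟩
  have h2 := FF_le (J := J) (q := q) (r := r) (B := B) hK hA dC.1 Matrix.PosDef.one hp hs ha hb hab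
  have h3 := mul_le_mul_of_nonneg_left (h2.trans h1) hs.le
  refine le_trans (le_of_eq ?_) h3
  field_simp

lemma sup_main (hK : K * K' = 1) (hJ1 : ∀ Y : Matrix n n ℂ, Y.PosDef → (∑ i, J i * Y * (J i)ᴴ).PosDef)
    (hJ2 : ∀ Y : Matrix m m ℂ, Y.PosDef → (∑ i, (J i)ᴴ * Y * J i).PosDef)
    (ht0 : 0 ≤ t) (ht1 : t ≤ 1) (hA0 : A0.PosDef) (hA1 : A1.PosDef)
    (hB0 : B0.PosDef) (hB1 : B1.PosDef)
    (hp : 0 < p) (hq : 0 < q) (hr : 0 < r) (hs : 0 < s)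
    (hr1 : r < 1) (ha : 1 ≤ a) (hpa : p * a ≤ 1) (hb : 1 ≤ b) (hqb : q + (1 - 1 / b) ≤ 1 - r)
    (hrb : r * b ≤ 1) (hab : 1 / a + 1 / b = 1 / s) :
    t * sSup {x | ∃ C : Matrix m m ℂ, IsDensity C ∧ x = FF K J p q r s A0 B0 C} +
    (1 - t) * sSup {x | ∃ C : Matrix m m ℂ, IsDensity C ∧ x = FF K J p q r s A1 B1 C} ≤
    sSup {x | ∃ C : Matrix m m ℂ, IsDensity C ∧
      x = FF K J p q r s (t • A0 + (1 - t) • A1) (t • B0 + (1 - t) • B1) C} := by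
  rcases isEmpty_or_nonempty m with hm | hm
  · have h0 : ∀ C : Matrix m m ℂ, ¬ IsDensity C := by
      intro C hC
      have := dens_nonempty hC
      exact not_isEmpty_of_nonempty m hm
    simp [h0]
  obtain ⟨D, hD, -⟩ := dens_pd (m := m)
  have hAt := pd_comb hA0 hA1 ht0 ht1
  have hbd := FF_bdd (J := J) (q := q) (r := r) (B := t • B0 + (1 - t) • B1) hK hAt hp hr hs ha hb hab
  set S := sSup {x | ∃ C : Matrix m m ℂ, IsDensity C ∧
      x = FF K J p q r s (t • A0 + (1 - t) • A1) (t • B0 + (1 - t) • B1) C} with hS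
  have key : ∀ C0 C1 : Matrix m m ℂ, IsDensity C0 → IsDensity C1 →
      t * FF K J p q r s A0 B0 C0 + (1 - t) * FF K J p q r s A1 B1 C1 ≤ S := by
    intro C0 C1 d0 d1
    have h : ∀ e ∈ Set.Ioo (0:ℝ) 1,
        (1 - e) ^ 2 * (t * FF K J p q r s A0 B0 C0 + (1 - t) * FF K J p q r s A1 B1 C1) ≤ S := by
      intro e he
      obtain ⟨C, dC, hC⟩ := FF_main hK hJ1 hJ2 ht0 ht1 hA0 hA1 hB0 hB1 d0 d1 hp hq hr hs hr1 ha hpa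
        hb hqb hrb hab he.1 he.2
      exact hC.trans (le_csSup hbd ⟨C, dC, rfl⟩)
    set y := t * FF K J p q r s A0 B0 C0 + (1 - t) * FF K J p q r s A1 B1 C1 with hy
    have hcont : Filter.Tendsto (fun e : ℝ => (1 - e) ^ 2 * y) (nhdsWithin 0 (Set.Ioi 0))
        (nhds ((1 - 0) ^ 2 * y)) := by
      apply Filter.Tendsto.mono_left _ nhdsWithin_le_nhds
      exact (by fun_prop : Continuous (fun e : ℝ => (1 - e) ^ 2 * y)).tendsto 0
    have := le_of_tendsto hcont (by
      filter_upwards [Ioo_mem_nhdsGT (zero_lt_one (α := ℝ))] with e he using h e he)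
    simpa using this
  have hu : 0 ≤ 1 - t := by linarith
  rw [← smul_eq_mul, ← smul_eq_mul, ← Real.sSup_smul_of_nonneg ht0, ← Real.sSup_smul_of_nonneg hu]
  have hne : ∀ (A : Matrix n n ℂ) (B : Matrix m m ℂ) (k : ℝ), (k • {x | ∃ C : Matrix m m ℂ, IsDensity C ∧ x = FF K J p q r s A B C}).Nonempty :=
    fun A B k => Set.Nonempty.smul_set ⟨_, D, hD, rfl⟩
  rw [← le_sub_iff_add_le]
  apply csSup_le (hne _ _ _)
  rintro _ ⟨_, ⟨C0, d0, rfl⟩, rfl⟩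
  rw [le_sub_comm]
  apply csSup_le (hne _ _ _)
  rintro _ ⟨_, ⟨C1, d1, rfl⟩, rfl⟩
  have := key C0 C1 d0 d1
  simp only [smul_eq_mul]
  linarith

end parteight

section partnine

variable {n₁ n₂ : Type*} [Fintype n₁] [DecidableEq n₁] [Fintype n₂] [DecidableEq n₂]

/-- the coordinate blocks -/
noncomputable def EE {n₁ : Type*} [DecidableEq n₁] (n₂ : Type*) [DecidableEq n₂] (i : n₁) : Matrix n₂ (n₁ × n₂) ℂ :=
  Matrix.of fun j x => if x = (i, j) then 1 else 0

lemma EE_mul (i : n₁) {l : Type*} (M : Matrix (n₁ × n₂) l ℂ) :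
    (EE n₂ i * M : Matrix n₂ l ℂ) = Matrix.of fun j y => M (i, j) y := by
  apply Matrix.ext
  intro j y
  rw [Matrix.mul_apply]
  simp [EE]

lemma mul_EE (i : n₁) {l : Type*} (M : Matrix l n₂ ℂ) (x : l) (y : n₁ × n₂) :
    (M * EE n₂ i : Matrix l (n₁ × n₂) ℂ) x y = if y.1 = i then M x y.2 else 0 := by
  obtain ⟨y1, y2⟩ := y
  simp only [EE, Matrix.mul_apply, Matrix.of_apply, Prod.mk.injEq, mul_ite, mul_one, mul_zero]
  by_cases h : y1 = i
  · simp [h]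
  · simp [h]

lemma EE_kron (Y : Matrix n₂ n₂ ℂ) :
    ∑ i : n₁, (EE n₂ i)ᴴ * Y * EE n₂ i = (1 : Matrix n₁ n₁ ℂ) ⊗ₖ Y := by
  apply Matrix.ext
  rintro ⟨i, j⟩ ⟨i', j'⟩
  rw [Matrix.sum_apply, Matrix.kroneckerMap_apply]
  have h : ∀ k : n₁, ((EE n₂ k)ᴴ * Y * EE n₂ k) (i, j) (i', j') =
      if i' = k then (if i = k then Y j j' else 0) else 0 := by
    intro k
    rw [mul_EE]
    congr 1
    have : (EE n₂ k)ᴴ * Y = (Yᴴ * EE n₂ k)ᴴ := by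
      rw [Matrix.conjTranspose_mul, Matrix.conjTranspose_conjTranspose]
    rw [this, Matrix.conjTranspose_apply, mul_EE]
    simp only [apply_ite star, Matrix.conjTranspose_apply, star_star, star_zero]
  simp only [h, Finset.sum_ite_eq, Finset.mem_univ, if_true, Matrix.one_apply, ite_mul, one_mul,
    zero_mul]

lemma EE_one (i : n₁) : EE n₂ i * (EE n₂ i)ᴴ = 1 := by
  rw [EE_mul]
  apply Matrix.ext
  intro j j'
  simp [EE, Matrix.one_apply]

lemma EE_J1 [Nonempty n₁] (Y : Matrix (n₁ × n₂) (n₁ × n₂) ℂ) (hY : Y.PosDef) :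
    (∑ i : n₁, EE n₂ i * Y * (EE n₂ i)ᴴ).PosDef := by
  have h : ∀ i : n₁, (EE n₂ i * Y * (EE n₂ i)ᴴ).PosDef := by
    intro i
    apply hY.mul_mul_conjTranspose_same
    intro x y hxy
    have := congrArg (fun v => Matrix.vecMul v (EE n₂ i)ᴴ) hxy
    simpa [Matrix.vecMul_vecMul, EE_one] using this
  obtain ⟨i0⟩ := ‹Nonempty n₁›
  rw [← Finset.add_sum_erase _ _ (Finset.mem_univ i0)]
  exact (h i0).add_posSemidef (Matrix.posSemidef_sum _ fun i _ => (h i).posSemidef)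

lemma Qsup_eq {K A : Matrix (n₁ × n₂) (n₁ × n₂) ℂ} {B : Matrix n₂ n₂ ℂ} {p q r s : ℝ}
    (hA : A.PosDef) (hB : B.PosDef) (hp : 0 < p) (hq : 0 < q) (hr : 0 < r) (hs : 0 < s) :
    Qsup K p q r s A B = sSup {x | ∃ C : Matrix n₂ n₂ ℂ, IsDensity C ∧ x = FF K (EE n₂) p q r s A B C} := by
  unfold Qsup
  congr 1
  apply Set.ext
  intro x
  refine exists_congr fun C => and_congr_right fun hC => ?_
  rw [matPow_eq hA.posSemidef (by linarith), matPow_eq hB.posSemidef (by linarith),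
    matPow_eq hC.1 hr, ← EE_kron]
  change x = (Matrix.trace (matPow (mp A (p / 2) * K * NN (EE n₂) q r B C * Kᴴ * mp A (p / 2)) s)).re ↔ _
  have e : mp A (p / 2) * K * NN (EE n₂) q r B C * Kᴴ * mp A (p / 2) =
      (mp A (p / 2) * K) * NN (EE n₂) q r B C * (mp A (p / 2) * K)ᴴ := by
    rw [Matrix.conjTranspose_mul, mp_herm]
    simp only [Matrix.mul_assoc]
  rw [e, matPow_eq ((NN_psd hC.1).mul_mul_conjTranspose_same _) hs]
  rfl

lemma stmt0_aux
    (K : Matrix (n₁ × n₂) (n₁ × n₂) ℂ) (hK : IsUnit K)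
    (p q r s : ℝ) (hp0 : 0 < p) (hq0 : 0 < q)
    (hr0 : 0 < r)
    (hs1 : p / (p + q + r) ≤ s) (hs2 : (q + r) / (p + q + r) ≤ s)
    (hs3 : s ≤ 1 / (p + q + r))
    (A₀ A₁ : Matrix (n₁ × n₂) (n₁ × n₂) ℂ) (hA₀ : A₀.PosDef) (hA₁ : A₁.PosDef)
    (B₀ B₁ : Matrix n₂ n₂ ℂ) (hB₀ : B₀.PosDef) (hB₁ : B₁.PosDef)
    (t : ℝ) (ht0 : 0 ≤ t) (ht1 : t ≤ 1) :
    Qsup K p q r s (t • A₀ + (1 - t) • A₁) (t • B₀ + (1 - t) • B₁) ≥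
      t * Qsup K p q r s A₀ B₀ + (1 - t) * Qsup K p q r s A₁ B₁ := by
  have hd : 0 < p + q + r := by linarith
  have hs : 0 < s := lt_of_lt_of_le (by positivity) hs1
  rw [div_le_iff₀ hd] at hs1 hs2
  rw [le_div_iff₀ hd] at hs3
  rw [Qsup_eq hA₀ hB₀ hp0 hq0 hr0 hs, Qsup_eq hA₁ hB₁ hp0 hq0 hr0 hs,
    Qsup_eq (pd_comb hA₀ hA₁ ht0 ht1) (pd_comb hB₀ hB₁ ht0 ht1) hp0 hq0 hr0 hs]
  rcases isEmpty_or_nonempty n₁ with h1 | h1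
  · have h0 : ∀ (A : Matrix (n₁ × n₂) (n₁ × n₂) ℂ) (B C : Matrix n₂ n₂ ℂ),
        FF K (EE n₂) p q r s A B C = 0 := by
      intro A B C
      simp [FF, tp, Matrix.trace]
    simp only [h0]
    have h2 : sSup {x : ℝ | ∃ C : Matrix n₂ n₂ ℂ, IsDensity C ∧ x = 0} = 0 := by
      apply le_antisymm
      · exact Real.sSup_le (by rintro x ⟨C, -, rfl⟩; exact le_rfl) le_rfl
      · exact Real.sSup_nonneg (by rintro x ⟨C, -, rfl⟩; exact le_rfl)
    rw [h2]; simp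
  obtain ⟨u, rfl⟩ := hK
  have hqr : 0 < q + r := by linarith
  set L := s * (p + q + r) with hL
  have hL0 : 0 < L := by positivity
  have hrL : r < L := by linarith
  refine sup_main (a := L / p) (b := L / (q + r)) (u.mul_inv) EE_J1 ?_ ht0 ht1 hA₀ hA₁ hB₀ hB₁ hp0 hq0 hr0 hs
    (by linarith) ?_ ?_ ?_ ?_ ?_ ?_
  · intro Y hY
    rw [EE_kron]
    exact Matrix.PosDef.one.kronecker hY
  · rw [le_div_iff₀ hp0]; linarith
  · rw [mul_div_cancel₀ _ hp0.ne']; exact hs3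
  · rw [le_div_iff₀ hqr]; linarith
  · have : q + r ≤ (q + r) / L := by
      rw [le_div_iff₀ hL0]; nlinarith
    rw [one_div_div]
    linarith
  · rw [← mul_div_assoc, div_le_iff₀ hqr]; nlinarith
  · rw [hL]; field_simp; ring

end partnine

/-- joint concavity of `(A,B) ↦ Q(A,B)` for
`0 < p,q,r ≤ 1` and `p/(p+q+r), (q+r)/(p+q+r) ≤ s ≤ 1/(p+q+r)`. -/
theorem stmt0 {n₁ n₂ : Type*} [Fintype n₁] [DecidableEq n₁]
    [Fintype n₂] [DecidableEq n₂]
    (K : Matrix (n₁ × n₂) (n₁ × n₂) ℂ) (hK : IsUnit K)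
    (p q r s : ℝ) (hp0 : 0 < p) (hp1 : p ≤ 1) (hq0 : 0 < q) (hq1 : q ≤ 1)
    (hr0 : 0 < r) (hr1 : r ≤ 1)
    (hs1 : p / (p + q + r) ≤ s) (hs2 : (q + r) / (p + q + r) ≤ s)
    (hs3 : s ≤ 1 / (p + q + r))
    (A₀ A₁ : Matrix (n₁ × n₂) (n₁ × n₂) ℂ) (hA₀ : A₀.PosDef) (hA₁ : A₁.PosDef)
    (B₀ B₁ : Matrix n₂ n₂ ℂ) (hB₀ : B₀.PosDef) (hB₁ : B₁.PosDef)
    (t : ℝ) (ht0 : 0 ≤ t) (ht1 : t ≤ 1) :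
    Qsup K p q r s ((t : ℂ) • A₀ + ((1 - t : ℝ) : ℂ) • A₁)
        ((t : ℂ) • B₀ + ((1 - t : ℝ) : ℂ) • B₁) ≥
      t * Qsup K p q r s A₀ B₀ + (1 - t) * Qsup K p q r s A₁ B₁ := by
  have hA : (t : ℂ) • A₀ + ((1 - t : ℝ) : ℂ) • A₁ = t • A₀ + (1 - t) • A₁ := by
    rw [Complex.coe_smul, Complex.coe_smul]
  have hB : (t : ℂ) • B₀ + ((1 - t : ℝ) : ℂ) • B₁ = t • B₀ + (1 - t) • B₁ := by
    rw [Complex.coe_smul, Complex.coe_smul]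
  rw [hA, hB]
  exact stmt0_aux K hK p q r s hp0 hq0 hr0 hs1 hs2 hs3 A₀ A₁ hA₀ hA₁ B₀ B₁ hB₀ hB₁ t ht0 ht1
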